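/- Suppose there exist θ^L < θ^H in (0,1) such that, wherever u'' exists, u''(θ) < 0 for θ ∈ [0,θ^L), u''(θ) > 0 for θ ∈ (θ^L,θ^H), and u''(θ) < 0 for θ ∈ (θ^H,1]. Suppose there is no pair θ_*^L < θ_*^H in (θ^L,θ^H) satisfying u(m^L) + u'(m^L)·(θ_*^L − m^L) = u(θ_*^L) and u(m^H) + u'(m^H)·(θ_*^H − m^H) = u(θ_*^H) with m^L = E_F[θ|(0,θ_*^L)], m^H = E_F[θ|(θ_*^H,1)], and suppose there is no θ_*^M ∈ (0,1) satisfying both u(m^L) + u'(m^L)·(θ_*^M − m^L) = u(m^H) + u'(m^H)·(θ_*^M − m^H) and u(m^L)·F(θ_*^M) + u(m^H)·(1 − F(θ_*^M)) ≥ u(E_F[θ]) with m^L = E_F[θ|(0,θ_*^M)], m^H = E_F[θ|(θ_*^M,1)]. Then complete pooling P_* = [0,1] is optimal for u. -/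

import Mathlib

open MeasureTheory Set
open scoped Classical

noncomputable section

/-- CDF associated with the density `f` (relevant on `[0,1]`): `F(x) = ∫_0^x f`. -/
def cdfF (f : ℝ → ℝ) (x : ℝ) : ℝ := ∫ t in (0:ℝ)..x, f t

/-- Conditional mean `E_F[θ | (ξ,ζ)]` of `θ` on the interval `(ξ, ζ)` under density `f`. -/
def condMean (f : ℝ → ℝ) (ξ ζ : ℝ) : ℝ :=
  (∫ t in ξ..ζ, t * f t) / (∫ t in ξ..ζ, f t)

/-- `f` is a strictly positive density of a probability measure on `[0,1]`. -/
def IsDensity (f : ℝ → ℝ) : Prop :=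
  (∀ θ ∈ Icc (0:ℝ) 1, 0 < f θ) ∧ IntegrableOn f (Icc (0:ℝ) 1) ∧
    (∫ t in (0:ℝ)..1, f t) = 1

/-- An open pooling set: a relatively open subset of `[0,1]`. -/
def IsPoolingSet (P : Set ℝ) : Prop :=
  ∃ U : Set ℝ, IsOpen U ∧ P = U ∩ Icc (0:ℝ) 1

/-- Left endpoint `ξ_i` of the interval component of `θ` in `P`. -/
def compInf (P : Set ℝ) (θ : ℝ) : ℝ := sInf (connectedComponentIn P θ)

/-- Right endpoint `ζ_i` of the interval component of `θ` in `P`. -/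
def compSup (P : Set ℝ) (θ : ℝ) : ℝ := sSup (connectedComponentIn P θ)

/-- The posterior-mean map induced by the pooling set `P`: states in a pooled
interval are mapped to the conditional mean of that interval, other states to
themselves. -/
def poolMean (f : ℝ → ℝ) (P : Set ℝ) (θ : ℝ) : ℝ :=
  if θ ∈ P then condMean f (compInf P θ) (compSup P θ) else θ

/-- The induced distribution `G_P` of posterior means. -/
def Gp (f : ℝ → ℝ) (P : Set ℝ) (θ : ℝ) : ℝ :=
  if θ ∈ P then
    (if θ < condMean f (compInf P θ) (compSup P θ) then cdfF f (compInf P θ)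
     else cdfF f (compSup P θ))
  else cdfF f θ

/-- `Γ_P(θ) = ∫_0^θ G_P(t) dt`. -/
def Gam (f : ℝ → ℝ) (P : Set ℝ) (θ : ℝ) : ℝ := ∫ t in (0:ℝ)..θ, Gp f P t

/-- The value `∫_0^1 u(θ) dG_P(θ)` of the pooling set `P` under payoff `u`,
written as the expectation of `u` composed with the posterior-mean map. -/
def poolValue (f : ℝ → ℝ) (u : ℝ → ℝ) (P : Set ℝ) : ℝ :=
  ∫ θ in (0:ℝ)..1, u (poolMean f P θ) * f θ

/-- `P` is an optimal pooling set for `u`. -/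
def IsOptimal (f : ℝ → ℝ) (u : ℝ → ℝ) (P : Set ℝ) : Prop :=
  IsPoolingSet P ∧ ∀ Q : Set ℝ, IsPoolingSet Q → poolValue f u Q ≤ poolValue f u P

/-- `u` is continuously differentiable on `[0,1]` with derivative `u'`, and `u'`
is absolutely continuous with integrable a.e. derivative `u''` (encoded via the
fundamental theorem of calculus). -/
def C1AC (u u' u'' : ℝ → ℝ) : Prop :=
  (∀ θ ∈ Icc (0:ℝ) 1, HasDerivAt u (u' θ) θ) ∧
  ContinuousOn u' (Icc (0:ℝ) 1) ∧
  IntegrableOn u'' (Icc (0:ℝ) 1) ∧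
  (∀ θ ∈ Icc (0:ℝ) 1, u' θ = u' 0 + ∫ t in (0:ℝ)..θ, u'' t)

/-!
By Jensen's inequality, a convex price function `p ≥ u` bounds the payoff from every pooling of an
interval by the integral of `p`. If a point `c` of the convex region is not pooled, the problem
splits at `c`. On each side the optimal price is either a tangent line, so that one pool is optimal,
or a tangent line continued by `u` itself from a cutoff where the two meet. Since two such cutoffs
are excluded, some pooling into two intervals is at least as good. If instead the convex region lies
inside one pool `(ξ, ζ)`, the states on either side may be pooled, and comparing `u ξ` with the
tangent line at the mean of `(ξ, ζ)` shows how to get from three pools to two.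

By compactness there is a best cutoff between two pools. An interior one satisfies a first-order
condition and is at least as good as complete pooling, which is excluded; at an endpoint the two
pools reduce to complete pooling.
-/

/-- The tangent line to `u` at `m`, evaluated at `t`; `u'` stands for the derivative of `u`. -/
def tangentLine (u u' : ℝ → ℝ) (m t : ℝ) : ℝ := u m + u' m * (t - m)

/-- `f` is a strictly positive integrable density on `[a, b]`. Unlike in `IsDensity`, the interval
is arbitrary and the total mass is not normalised, so the notion passes to subintervals and to
reflections. -/
structure PosDensityOn (f : ℝ → ℝ) (a b : ℝ) : Prop where
  pos : ∀ t ∈ Icc a b, 0 < f t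
  integrableOn : IntegrableOn f (Icc a b)

/-- The payoff from pooling the states in `(x, y)`: their mass times `u` at their conditional
mean. -/
def poolPayoff (f u : ℝ → ℝ) (x y : ℝ) : ℝ := (∫ t in x..y, f t) * u (condMean f x y)

/-- The payoff from splitting `(a, b)` into the two pools `(a, z)` and `(z, b)`. -/
def twoPoolPayoff (f u : ℝ → ℝ) (a b z : ℝ) : ℝ := poolPayoff f u a z + poolPayoff f u z b

section TangentLine

variable {u u' : ℝ → ℝ} {s : Set ℝ} {m t : ℝ}

@[simp]
lemma tangentLine_self (u u' : ℝ → ℝ) (m : ℝ) : tangentLine u u' m m = u m := by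
  simp [tangentLine]

@[fun_prop]
lemma continuous_tangentLine (u u' : ℝ → ℝ) (m : ℝ) : Continuous (tangentLine u u' m) := by
  unfold tangentLine
  fun_prop

lemma convexOn_tangentLine (hs : Convex ℝ s) : ConvexOn ℝ s (tangentLine u u' m) :=
  ⟨hs, fun x _ y _ p q _ _ hpq => le_of_eq <| by
    simp only [tangentLine, smul_eq_mul]
    linear_combination (u' m * m - u m) * hpq⟩

lemma concaveOn_tangentLine (hs : Convex ℝ s) : ConcaveOn ℝ s (tangentLine u u' m) :=
  ⟨hs, fun x _ y _ p q _ _ hpq => le_of_eq <| by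
    simp only [tangentLine, smul_eq_mul]
    linear_combination (u m - u' m * m) * hpq⟩

lemma tangentLine_comp_neg (u u' : ℝ → ℝ) (m t : ℝ) :
    tangentLine (fun r => u (-r)) (fun r => -u' (-r)) m t = tangentLine u u' (-m) (-t) := by
  unfold tangentLine
  ring

lemma tangentLine_lt_of_strictConvexOn (hu : StrictConvexOn ℝ s u) (hm : m ∈ s) (ht : t ∈ s)
    (hmt : m ≠ t) (hd : HasDerivAt u (u' m) m) : tangentLine u u' m t < u t := by
  unfold tangentLine
  rcases hmt.lt_or_gt with h | h
  · have := hu.lt_slope_of_hasDerivAt hm ht h hd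
    rw [slope_def_field, lt_div_iff₀ (sub_pos.2 h)] at this
    linarith
  · have := hu.slope_lt_of_hasDerivAt ht hm h hd
    rw [slope_def_field, div_lt_iff₀ (sub_pos.2 h)] at this
    linarith

lemma lt_tangentLine_of_strictConcaveOn (hu : StrictConcaveOn ℝ s u) (hm : m ∈ s) (ht : t ∈ s)
    (hmt : m ≠ t) (hd : HasDerivAt u (u' m) m) : u t < tangentLine u u' m t := by
  have := tangentLine_lt_of_strictConvexOn (u' := fun r => -u' r) hu.neg hm ht hmt hd.neg
  simp only [tangentLine, Pi.neg_apply] at this ⊢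
  linarith

lemma tangentLine_le_of_convexOn (hu : ConvexOn ℝ s u) (hm : m ∈ s) (ht : t ∈ s)
    (hd : HasDerivAt u (u' m) m) : tangentLine u u' m t ≤ u t := by
  unfold tangentLine
  rcases lt_trichotomy m t with h | rfl | h
  · have := hu.le_slope_of_hasDerivAt hm ht h hd
    rw [slope_def_field, le_div_iff₀ (sub_pos.2 h)] at this
    linarith
  · simp
  · have := hu.slope_le_of_hasDerivAt ht hm h hd
    rw [slope_def_field, div_le_iff₀ (sub_pos.2 h)] at this
    linarith

lemma le_tangentLine_of_concaveOn (hu : ConcaveOn ℝ s u) (hm : m ∈ s) (ht : t ∈ s)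
    (hd : HasDerivAt u (u' m) m) : u t ≤ tangentLine u u' m t := by
  have := tangentLine_le_of_convexOn (u' := fun r => -u' r) hu.neg hm ht hd.neg
  simp only [tangentLine, Pi.neg_apply] at this ⊢
  linarith

end TangentLine

lemma condMean_comm (f : ℝ → ℝ) (x y : ℝ) : condMean f x y = condMean f y x := by
  simp only [condMean, intervalIntegral.integral_symm x y, neg_div_neg_eq]

lemma condMean_comp_neg (f : ℝ → ℝ) (x y : ℝ) :
    condMean (fun t => f (-t)) x y = -condMean f (-y) (-x) := by
  have hmoment : ∫ t in x..y, t * f (-t) = -∫ t in (-y)..(-x), t * f t := by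
    rw [← intervalIntegral.integral_comp_neg (fun t => t * f t), ← intervalIntegral.integral_neg]
    simp only [neg_mul, neg_neg]
  rw [condMean, condMean, hmoment, intervalIntegral.integral_comp_neg, neg_div]

lemma poolPayoff_comp_neg (f u : ℝ → ℝ) (x y : ℝ) :
    poolPayoff (fun t => f (-t)) (fun t => u (-t)) x y = poolPayoff f u (-y) (-x) := by
  simp only [poolPayoff, condMean_comp_neg, intervalIntegral.integral_comp_neg, neg_neg]

@[simp]
lemma poolPayoff_self (f u : ℝ → ℝ) (x : ℝ) : poolPayoff f u x x = 0 := by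
  simp [poolPayoff]

namespace PosDensityOn

variable {f g u u' : ℝ → ℝ} {a b x y z m α β : ℝ}

lemma mono (hf : PosDensityOn f a b) (hx : a ≤ x) (hy : y ≤ b) : PosDensityOn f x y where
  pos t ht := hf.pos t (Icc_subset_Icc hx hy ht)
  integrableOn := hf.integrableOn.mono_set (Icc_subset_Icc hx hy)

lemma comp_neg (hf : PosDensityOn f a b) : PosDensityOn (fun t => f (-t)) (-b) (-a) where
  pos t ht := hf.pos (-t) ⟨by linarith [ht.2], by linarith [ht.1]⟩
  integrableOn := by
    simpa [Function.comp_def] using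
      ((Measure.measurePreserving_neg (volume : Measure ℝ)).integrableOn_comp_preimage
        (Homeomorph.neg ℝ).measurableEmbedding).2 hf.integrableOn

lemma intervalIntegrable_mul (hf : PosDensityOn f x y) (hxy : x ≤ y)
    (hg : ContinuousOn g (Icc x y)) : IntervalIntegrable (fun t => g t * f t) volume x y :=
  ((intervalIntegrable_iff_integrableOn_Icc_of_le hxy).2 hf.integrableOn).continuousOn_mul
    (by rwa [uIcc_of_le hxy])

lemma intervalIntegrable (hf : PosDensityOn f x y) (hxy : x ≤ y) :
    IntervalIntegrable f volume x y :=
  (intervalIntegrable_iff_integrableOn_Icc_of_le hxy).2 hf.integrableOn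

lemma integral_mul_mono {h : ℝ → ℝ} (hf : PosDensityOn f x y) (hxy : x ≤ y)
    (hg : ContinuousOn g (Icc x y)) (hh : ContinuousOn h (Icc x y))
    (hle : ∀ t ∈ Icc x y, g t ≤ h t) : ∫ t in x..y, g t * f t ≤ ∫ t in x..y, h t * f t :=
  intervalIntegral.integral_mono_on hxy (hf.intervalIntegrable_mul hxy hg)
    (hf.intervalIntegrable_mul hxy hh)
    fun t ht => mul_le_mul_of_nonneg_right (hle t ht) (hf.pos t ht).le

lemma integral_mul_add_adjacent (hf : PosDensityOn f x z) (hxy : x ≤ y) (hyz : y ≤ z)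
    (hg : ContinuousOn g (Icc x z)) :
    (∫ t in x..y, g t * f t) + ∫ t in y..z, g t * f t = ∫ t in x..z, g t * f t :=
  intervalIntegral.integral_add_adjacent_intervals
    ((hf.mono le_rfl hyz).intervalIntegrable_mul hxy (hg.mono (Icc_subset_Icc_right hyz)))
    ((hf.mono hxy le_rfl).intervalIntegrable_mul hyz (hg.mono (Icc_subset_Icc_left hxy)))

lemma mass_pos (hf : PosDensityOn f x y) (hxy : x < y) : 0 < ∫ t in x..y, f t :=
  intervalIntegral.intervalIntegral_pos_of_pos_on (hf.intervalIntegrable hxy.le)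
    (fun t ht => hf.pos t (Ioo_subset_Icc_self ht)) hxy

lemma mass_mul_condMean (hf : PosDensityOn f x y) (hxy : x ≤ y) :
    (∫ t in x..y, f t) * condMean f x y = ∫ t in x..y, t * f t := by
  rcases hxy.eq_or_lt with rfl | h
  · simp
  · exact mul_div_cancel₀ _ (hf.mass_pos h).ne'

lemma integral_affine_mul (hf : PosDensityOn f x y) (hxy : x ≤ y) (α β : ℝ) :
    ∫ t in x..y, (α * t + β) * f t = (∫ t in x..y, f t) * (α * condMean f x y + β) := by
  have hid : IntervalIntegrable (fun t => t * f t) volume x y :=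
    hf.intervalIntegrable_mul hxy continuousOn_id
  have hmean := hf.mass_mul_condMean hxy
  simp only [add_mul, mul_assoc]
  rw [intervalIntegral.integral_add (hid.const_mul α) ((hf.intervalIntegrable hxy).const_mul β),
    intervalIntegral.integral_const_mul, intervalIntegral.integral_const_mul, ← hmean]
  ring

lemma affine_condMean_pos (hf : PosDensityOn f x y) (hxy : x < y)
    (h : ∀ t ∈ Ioo x y, 0 < α * t + β) : 0 < α * condMean f x y + β := by
  have hint : 0 < ∫ t in x..y, (α * t + β) * f t :=
    intervalIntegral.intervalIntegral_pos_of_pos_on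
      (hf.intervalIntegrable_mul hxy.le (by fun_prop))
      (fun t ht => mul_pos (h t ht) (hf.pos t (Ioo_subset_Icc_self ht))) hxy
  rw [hf.integral_affine_mul hxy.le] at hint
  exact pos_of_mul_pos_right hint (hf.mass_pos hxy).le

lemma condMean_mem_Ioo (hf : PosDensityOn f x y) (hxy : x < y) : condMean f x y ∈ Ioo x y := by
  have hleft := hf.affine_condMean_pos (α := 1) (β := -x) hxy fun t ht => by linarith [ht.1]
  have hright := hf.affine_condMean_pos (α := -1) (β := y) hxy fun t ht => by linarith [ht.2]
  constructor <;> linarith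

lemma condMean_mem_Icc (hf : PosDensityOn f x y) (hxy : x < y) : condMean f x y ∈ Icc x y :=
  Ioo_subset_Icc_self (hf.condMean_mem_Ioo hxy)

lemma integral_tangentLine_mul (hf : PosDensityOn f x y) (hxy : x ≤ y) (u u' : ℝ → ℝ) (m : ℝ) :
    ∫ t in x..y, tangentLine u u' m t * f t =
      (∫ t in x..y, f t) * tangentLine u u' m (condMean f x y) := by
  have haffine : ∀ t, tangentLine u u' m t = u' m * t + (u m - u' m * m) := fun t => by
    unfold tangentLine; ring
  simp only [haffine, hf.integral_affine_mul hxy]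

lemma poolPayoff_eq_integral_tangentLine (hf : PosDensityOn f x y) (hxy : x ≤ y)
    (u u' : ℝ → ℝ) :
    poolPayoff f u x y = ∫ t in x..y, tangentLine u u' (condMean f x y) t * f t := by
  rw [hf.integral_tangentLine_mul hxy, tangentLine_self, poolPayoff]

lemma integral_eq_poolPayoff_add_integral {p : ℝ → ℝ} (hf : PosDensityOn f x z) (hxy : x ≤ y)
    (hyz : y ≤ z) (hp : ContinuousOn p (Icc x z))
    (hleft : ∀ t ∈ Icc x y, p t = tangentLine u u' (condMean f x y) t)
    (hright : ∀ t ∈ Icc y z, p t = u t) :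
    ∫ t in x..z, p t * f t = poolPayoff f u x y + ∫ t in y..z, u t * f t := by
  rw [← hf.integral_mul_add_adjacent hxy hyz hp,
    (hf.mono le_rfl hyz).poolPayoff_eq_integral_tangentLine hxy u u']
  congr 1 <;> refine intervalIntegral.integral_congr fun t ht => congrArg (· * f t) ?_
  · exact hleft t (by rwa [uIcc_of_le hxy] at ht)
  · exact hright t (by rwa [uIcc_of_le hyz] at ht)

lemma condMean_le_condMean_left (hf : PosDensityOn f x z) (hxy : x ≤ y) (hyz : y < z) :
    condMean f x z ≤ condMean f y z := by
  rcases hxy.eq_or_lt with rfl | hlt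
  · rfl
  have hxz : x < z := hlt.trans hyz
  have hfl : PosDensityOn f x y := hf.mono le_rfl hyz.le
  have hfr : PosDensityOn f y z := hf.mono hxy le_rfl
  have hsum := hf.integral_mul_add_adjacent hxy hyz.le
    (g := fun t => 1 * t + -condMean f y z) (by fun_prop)
  rw [hf.integral_affine_mul hxz.le, hfl.integral_affine_mul hxy,
    hfr.integral_affine_mul hyz.le] at hsum
  have hlow : condMean f x y < condMean f y z :=
    (hfl.condMean_mem_Ioo hlt).2.trans (hfr.condMean_mem_Ioo hyz).1
  have := mul_pos (hfl.mass_pos hlt) (sub_pos.2 hlow)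
  by_contra! hgt
  have := mul_pos (hf.mass_pos hxz) (sub_pos.2 hgt)
  linarith

lemma poolPayoff_le_integral_tangentLine (hf : PosDensityOn f x y) (hxy : x ≤ y)
    (h : x < y → u (condMean f x y) ≤ tangentLine u u' m (condMean f x y)) :
    poolPayoff f u x y ≤ ∫ t in x..y, tangentLine u u' m t * f t := by
  rw [hf.integral_tangentLine_mul hxy]
  rcases hxy.eq_or_lt with rfl | hlt
  · simp
  · exact mul_le_mul_of_nonneg_left (h hlt) (hf.mass_pos hlt).le

lemma integral_tangentLine_le_poolPayoff (hf : PosDensityOn f x y) (hxy : x ≤ y)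
    (h : x < y → tangentLine u u' m (condMean f x y) ≤ u (condMean f x y)) :
    ∫ t in x..y, tangentLine u u' m t * f t ≤ poolPayoff f u x y := by
  rw [hf.integral_tangentLine_mul hxy]
  rcases hxy.eq_or_lt with rfl | hlt
  · simp
  · exact mul_le_mul_of_nonneg_left (h hlt) (hf.mass_pos hlt).le

lemma poolPayoff_add_le (hf : PosDensityOn f x z) (hxy : x ≤ y) (hyz : y ≤ z)
    (hleft : x < y → u (condMean f x y) ≤ tangentLine u u' m (condMean f x y))
    (hright : y < z → u (condMean f y z) ≤ tangentLine u u' m (condMean f y z))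
    (hmerged : x < z → tangentLine u u' m (condMean f x z) ≤ u (condMean f x z)) :
    poolPayoff f u x y + poolPayoff f u y z ≤ poolPayoff f u x z :=
  calc poolPayoff f u x y + poolPayoff f u y z
      ≤ (∫ t in x..y, tangentLine u u' m t * f t) + ∫ t in y..z, tangentLine u u' m t * f t :=
        add_le_add ((hf.mono le_rfl hyz).poolPayoff_le_integral_tangentLine hxy hleft)
          ((hf.mono hxy le_rfl).poolPayoff_le_integral_tangentLine hyz hright)
    _ = ∫ t in x..z, tangentLine u u' m t * f t :=
        hf.integral_mul_add_adjacent hxy hyz (by fun_prop)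
    _ ≤ poolPayoff f u x z := hf.integral_tangentLine_le_poolPayoff (hxy.trans hyz) hmerged

lemma poolPayoff_le_add (hf : PosDensityOn f x z) (hxy : x ≤ y) (hyz : y ≤ z)
    (hleft : x < y → tangentLine u u' (condMean f x z) (condMean f x y) ≤ u (condMean f x y))
    (hright : y < z → tangentLine u u' (condMean f x z) (condMean f y z) ≤ u (condMean f y z)) :
    poolPayoff f u x z ≤ poolPayoff f u x y + poolPayoff f u y z := by
  rw [hf.poolPayoff_eq_integral_tangentLine (hxy.trans hyz) u u',
    ← hf.integral_mul_add_adjacent hxy hyz (by fun_prop)]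
  exact add_le_add ((hf.mono le_rfl hyz).integral_tangentLine_le_poolPayoff hxy hleft)
    ((hf.mono hxy le_rfl).integral_tangentLine_le_poolPayoff hyz hright)

lemma poolPayoff_add_le_of_concaveOn {s : Set ℝ} (hf : PosDensityOn f x z) (hxy : x ≤ y)
    (hyz : y ≤ z) (hu : ConcaveOn ℝ s u) (hleft : x < y → condMean f x y ∈ s)
    (hright : y < z → condMean f y z ∈ s) :
    poolPayoff f u x y + poolPayoff f u y z ≤ poolPayoff f u x z := by
  rcases hxy.eq_or_lt with rfl | hxy'
  · simp
  rcases hyz.eq_or_lt with rfl | hyz'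
  · simp
  have hf₁ := hf.mono (le_refl x) hyz
  have hf₂ := hf.mono hxy (le_refl z)
  have hmass : (∫ t in x..y, f t) + ∫ t in y..z, f t = ∫ t in x..z, f t :=
    intervalIntegral.integral_add_adjacent_intervals (hf₁.intervalIntegrable hxy)
      (hf₂.intervalIntegrable hyz)
  have hmoment : (∫ t in x..y, t * f t) + ∫ t in y..z, t * f t = ∫ t in x..z, t * f t :=
    hf.integral_mul_add_adjacent hxy hyz continuousOn_id
  rw [← hf₁.mass_mul_condMean hxy, ← hf₂.mass_mul_condMean hyz] at hmoment
  have h₁ := hf₁.mass_pos hxy'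
  have h₂ := hf₂.mass_pos hyz'
  have hjensen := hu.2 (hleft hxy') (hright hyz') (div_pos h₁ (add_pos h₁ h₂)).le
    (div_pos h₂ (add_pos h₁ h₂)).le (by field_simp)
  simp only [smul_eq_mul, div_mul_eq_mul_div, ← add_div] at hjensen
  rwa [div_le_iff₀' (add_pos h₁ h₂), hmoment, hmass] at hjensen

lemma continuousOn_integral_mul (hf : PosDensityOn f a b) (hx : x ∈ Icc a b)
    (hg : ContinuousOn g (Icc a b)) :
    ContinuousOn (fun y => ∫ t in x..y, g t * f t) (Icc a b) := by
  have hab := hx.1.trans hx.2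
  simpa only [uIcc_of_le hab] using intervalIntegral.continuousOn_primitive_interval'
    (hf.intervalIntegrable_mul hab hg) (by rwa [uIcc_of_le hab])

lemma continuousOn_mass (hf : PosDensityOn f a b) (hx : x ∈ Icc a b) :
    ContinuousOn (fun y => ∫ t in x..y, f t) (Icc a b) := by
  simpa only [one_mul] using hf.continuousOn_integral_mul hx (g := fun _ => 1) continuousOn_const

lemma mass_ne_zero (hf : PosDensityOn f a b) (hx : x ∈ Icc a b) (hy : y ∈ Icc a b)
    (hxy : x ≠ y) : ∫ t in x..y, f t ≠ 0 := by
  rcases hxy.lt_or_gt with h | h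
  · exact ((hf.mono hx.1 hy.2).mass_pos h).ne'
  · rw [intervalIntegral.integral_symm, neg_ne_zero]
    exact ((hf.mono hy.1 hx.2).mass_pos h).ne'

lemma continuousOn_condMean (hf : PosDensityOn f a b) (hx : x ∈ Icc a b) :
    ContinuousOn (condMean f x) (Icc a b \ {x}) :=
  ((hf.continuousOn_integral_mul hx continuousOn_id).mono sdiff_subset).div
    ((hf.continuousOn_mass hx).mono sdiff_subset)
    fun _ hy => hf.mass_ne_zero hx hy.1 (Ne.symm hy.2)

lemma exists_condMean_left_eq {r : ℝ} (hf : PosDensityOn f x z) (hxy : x ≤ y) (hyz : y < z)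
    (hr : r ∈ Icc (condMean f x z) (condMean f y z)) : ∃ c ∈ Icc x y, condMean f c z = r := by
  have hcont : ContinuousOn (fun c => condMean f c z) (Icc x y) := by
    simp only [condMean_comm f _ z]
    exact (hf.continuousOn_condMean ⟨hxy.trans hyz.le, le_rfl⟩).mono fun c hc =>
      ⟨⟨hc.1, hc.2.trans hyz.le⟩, (hc.2.trans_lt hyz).ne⟩
  exact intermediate_value_Icc hxy hcont hr

lemma mass_mul_le_integral_of_convexOn {p : ℝ → ℝ} (hf : PosDensityOn f x y) (hxy : x ≤ y)
    (hp : ConvexOn ℝ (Icc x y) p) (hpc : ContinuousOn p (Icc x y)) :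
    (∫ t in x..y, f t) * p (condMean f x y) ≤ ∫ t in x..y, p t * f t := by
  rcases hxy.eq_or_lt with rfl | hlt
  · simp
  rw [← le_div_iff₀' (hf.mass_pos hlt)]
  refine le_of_forall_lt_imp_le_of_dense fun r hr => ?_
  obtain ⟨α, β, hle, rfl⟩ := hp.exists_affine_le_of_lt_real
    (hf.condMean_mem_Icc hlt) hr isClosed_Icc hpc.lowerSemicontinuousOn
  rw [le_div_iff₀' (hf.mass_pos hlt), ← hf.integral_affine_mul hxy]
  exact hf.integral_mul_mono hxy (by fun_prop) hpc hle

end PosDensityOn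

/-! ### Price functions -/

/-- `V` is at most the cost of every price function on `[a, b]`, that is, of every continuous convex
`p ≥ u`. By Jensen's inequality this holds for the payoff from any way of pooling the states in
`[a, b]`, so it lets all of them be bounded by a single well-chosen price function. -/
def LeDualValue (f u : ℝ → ℝ) (a b V : ℝ) : Prop :=
  ∀ p : ℝ → ℝ, ConvexOn ℝ (Icc a b) p → ContinuousOn p (Icc a b) → (∀ t ∈ Icc a b, u t ≤ p t) →
    V ≤ ∫ t in a..b, p t * f t

section Duality

variable {f u u' : ℝ → ℝ} {a b c V V₁ V₂ : ℝ}

lemma leDualValue_poolPayoff (hf : PosDensityOn f a b) (hab : a ≤ b) :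
    LeDualValue f u a b (poolPayoff f u a b) := by
  intro p hp hpc hup
  refine le_trans ?_ (hf.mass_mul_le_integral_of_convexOn hab hp hpc)
  rcases hab.eq_or_lt with rfl | hlt
  · simp
  · exact mul_le_mul_of_nonneg_left (hup _ (hf.condMean_mem_Icc hlt))
      (hf.mass_pos hlt).le

lemma leDualValue_integral (hf : PosDensityOn f a b) (hab : a ≤ b)
    (hu : ContinuousOn u (Icc a b)) : LeDualValue f u a b (∫ t in a..b, u t * f t) :=
  fun _ _ hpc hup => hf.integral_mul_mono hab hu hpc hup

namespace LeDualValue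

lemma add (hV₁ : LeDualValue f u a b V₁) (hV₂ : LeDualValue f u b c V₂)
    (hf : PosDensityOn f a c) (hab : a ≤ b) (hbc : b ≤ c) :
    LeDualValue f u a c (V₁ + V₂) := by
  intro p hp hpc hup
  have hleft : Icc a b ⊆ Icc a c := Icc_subset_Icc_right hbc
  have hright : Icc b c ⊆ Icc a c := Icc_subset_Icc_left hab
  rw [← hf.integral_mul_add_adjacent hab hbc hpc]
  exact add_le_add
    (hV₁ p (hp.subset hleft (convex_Icc a b)) (hpc.mono hleft) fun t ht => hup t (hleft ht))
    (hV₂ p (hp.subset hright (convex_Icc b c)) (hpc.mono hright) fun t ht => hup t (hright ht))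

lemma comp_neg (hV : LeDualValue f u a b V) :
    LeDualValue (fun t => f (-t)) (fun t => u (-t)) (-b) (-a) V := by
  intro p hp hpc hup
  have hmaps : MapsTo Neg.neg (Icc a b) (Icc (-b) (-a)) :=
    fun t ht => ⟨neg_le_neg ht.2, neg_le_neg ht.1⟩
  have hle := hV (fun t => p (-t))
    ⟨convex_Icc a b, fun x hx y hy α β hα hβ hαβ => by
      simpa only [neg_add, smul_neg] using hp.2 (hmaps hx) (hmaps hy) hα hβ hαβ⟩
    (hpc.comp continuousOn_neg hmaps) fun t ht => by simpa using hup (-t) (hmaps ht)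
  have hreflect := intervalIntegral.integral_comp_neg (a := a) (b := b) fun t => p t * f (-t)
  simp only [neg_neg] at hreflect
  rwa [hreflect] at hle

lemma le_poolPayoff (hV : LeDualValue f u a b V) (hf : PosDensityOn f a b) (hab : a ≤ b)
    (hle : ∀ t ∈ Icc a b, u t ≤ tangentLine u u' (condMean f a b) t) :
    V ≤ poolPayoff f u a b := by
  rw [hf.poolPayoff_eq_integral_tangentLine hab u u']
  exact hV _ (convexOn_tangentLine (convex_Icc a b))
    (continuous_tangentLine u u' _).continuousOn hle

lemma le_poolPayoff_of_concaveOn (hV : LeDualValue f u a b V) (hf : PosDensityOn f a b)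
    (hab : a ≤ b) (hu : ConcaveOn ℝ (Icc a b) u) (hd : ∀ t ∈ Icc a b, HasDerivAt u (u' t) t) :
    V ≤ poolPayoff f u a b := by
  rcases hab.eq_or_lt with rfl | hlt
  · simpa using hV (fun _ => u a) (convexOn_const _ (convex_Icc a a)) continuousOn_const
      fun t ht => by rw [Icc_self, mem_singleton_iff] at ht; rw [ht]
  · have hm := hf.condMean_mem_Icc hlt
    exact hV.le_poolPayoff hf hab fun t ht => le_tangentLine_of_concaveOn hu hm ht (hd _ hm)

end LeDualValue

end Duality

/-- The curvature assumption on the payoff `u`, whose derivative is `u'`: strictly concave on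
`[a, θL]`, strictly convex on `[θL, θH]` and strictly concave on `[θH, b]`. -/
structure ConcaveConvexConcave (u u' : ℝ → ℝ) (a θL θH b : ℝ) : Prop where
  hasDerivAt : ∀ t ∈ Icc a b, HasDerivAt u (u' t) t
  continuousOn_deriv : ContinuousOn u' (Icc a b)
  left_lt : a < θL
  inflection_lt : θL < θH
  lt_right : θH < b
  concave_left : StrictConcaveOn ℝ (Icc a θL) u
  convex_middle : StrictConvexOn ℝ (Icc θL θH) u
  concave_right : StrictConcaveOn ℝ (Icc θH b) u

namespace ConcaveConvexConcave

variable {u u' : ℝ → ℝ} {a b m t x θL θH : ℝ}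

lemma comp_neg (hu : ConcaveConvexConcave u u' a θL θH b) :
    ConcaveConvexConcave (fun t => u (-t)) (fun t => -u' (-t)) (-b) (-θH) (-θL) (-a) := by
  have hmaps {x y : ℝ} : MapsTo Neg.neg (Icc (-y) (-x)) (Icc x y) :=
    fun t ht => ⟨le_neg_of_le_neg ht.2, neg_le_of_neg_le ht.1⟩
  have hconcave {x y : ℝ} (h : StrictConcaveOn ℝ (Icc x y) u) :
      StrictConcaveOn ℝ (Icc (-y) (-x)) (fun t => u (-t)) :=
    ⟨convex_Icc _ _, fun p hp q hq hpq α β hα hβ hαβ => by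
      simpa only [neg_add, smul_neg] using
        h.2 (hmaps hp) (hmaps hq) (neg_injective.ne hpq) hα hβ hαβ⟩
  have hconvex {x y : ℝ} (h : StrictConvexOn ℝ (Icc x y) u) :
      StrictConvexOn ℝ (Icc (-y) (-x)) (fun t => u (-t)) :=
    ⟨convex_Icc _ _, fun p hp q hq hpq α β hα hβ hαβ => by
      simpa only [neg_add, smul_neg] using
        h.2 (hmaps hp) (hmaps hq) (neg_injective.ne hpq) hα hβ hαβ⟩
  exact
    { hasDerivAt := fun t ht => by
        simpa [Function.comp_def] using
          (hu.hasDerivAt (-t) (hmaps ht)).comp t (hasDerivAt_neg t)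
      continuousOn_deriv := (hu.continuousOn_deriv.comp continuousOn_neg hmaps).neg
      left_lt := neg_lt_neg hu.lt_right
      inflection_lt := neg_lt_neg hu.inflection_lt
      lt_right := neg_lt_neg hu.left_lt
      concave_left := hconcave hu.concave_right
      convex_middle := hconvex hu.convex_middle
      concave_right := hconcave hu.concave_left }

lemma continuousOn (hu : ConcaveConvexConcave u u' a θL θH b) : ContinuousOn u (Icc a b) :=
  fun t ht => (hu.hasDerivAt t ht).continuousAt.continuousWithinAt

lemma le_inflection_of_le_tangentLine (hu : ConcaveConvexConcave u u' a θL θH b)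
    (hx : x ∈ Icc θL θH) (hm : m ∈ Ico a x) (hle : u x ≤ tangentLine u u' m x) : m ≤ θL := by
  by_contra! hlt
  have hm' : m ∈ Icc a b := ⟨hm.1, by linarith [hm.2, hx.2, hu.lt_right]⟩
  exact (tangentLine_lt_of_strictConvexOn hu.convex_middle ⟨hlt.le, hm.2.le.trans hx.2⟩ hx hm.2.ne
    (hu.hasDerivAt m hm')).not_ge hle

/-- On `[θL, x]` the difference `u - ℓ` to the tangent line `ℓ` is convex and nonpositive at both
ends, while on `[a, θL]` the tangent line lies above `u` by concavity. -/
lemma le_tangentLine_of_le_tangentLine_right (hu : ConcaveConvexConcave u u' a θL θH b)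
    (hx : x ∈ Icc θL θH) (hm : m ∈ Ico a x) (hle : u x ≤ tangentLine u u' m x)
    (ht : t ∈ Icc a x) : u t ≤ tangentLine u u' m t := by
  have hmθ : m ∈ Icc a θL := ⟨hm.1, hu.le_inflection_of_le_tangentLine hx hm hle⟩
  have hconcave : ∀ s ∈ Icc a θL, u s ≤ tangentLine u u' m s := fun s hs =>
    le_tangentLine_of_concaveOn hu.concave_left.concaveOn hmθ hs
      (hu.hasDerivAt m ⟨hm.1, by linarith [hmθ.2, hu.inflection_lt, hu.lt_right]⟩)
  rcases le_total t θL with htθ | htθ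
  · exact hconcave t ⟨ht.1, htθ⟩
  · have hconvex : ConvexOn ℝ (Icc θL θH) (u - tangentLine u u' m) :=
      hu.convex_middle.convexOn.sub (concaveOn_tangentLine (convex_Icc _ _))
    have hmax := hconvex.le_max_of_mem_Icc ⟨le_rfl, hu.inflection_lt.le⟩ hx ⟨htθ, ht.2⟩
    have hends : max ((u - tangentLine u u' m) θL) ((u - tangentLine u u' m) x) ≤ 0 :=
      max_le (sub_nonpos.2 (hconcave θL ⟨hu.left_lt.le, le_rfl⟩)) (sub_nonpos.2 hle)
    exact sub_nonpos.1 (hmax.trans hends)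

end ConcaveConvexConcave

/-! ### One-sided problems -/

lemma convexOn_comp_max {k : ℝ → ℝ} {a x c : ℝ} (hax : a ≤ x) (hxc : x ≤ c)
    (hk : ConvexOn ℝ (Icc x c) k) (hmono : MonotoneOn k (Icc x c)) :
    ConvexOn ℝ (Icc a c) fun t => k (max t x) := by
  have himage : (fun t => max t x) '' Icc a c = Icc x c := by
    ext s
    constructor
    · rintro ⟨t, ht, rfl⟩
      exact ⟨le_max_right t x, max_le ht.2 hxc⟩
    · exact fun hs => ⟨s, ⟨hax.trans hs.1, hs.2⟩, max_eq_left hs.1⟩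
  exact ConvexOn.comp (himage ▸ hk)
    ((convexOn_id (convex_Icc a c)).sup (convexOn_const x (convex_Icc a c))) (himage ▸ hmono)

namespace ConcaveConvexConcave

variable {f u u' : ℝ → ℝ} {a b c m t x V θL θH : ℝ}

lemma monotoneOn_sub_tangentLine (hu : ConcaveConvexConcave u u' a θL θH b)
    (hx : x ∈ Ioc θL θH) (hm : m ∈ Ico a x) (htangent : tangentLine u u' m x = u x) :
    MonotoneOn (u - tangentLine u u' m) (Icc x θH) := by
  have hconvex : ConvexOn ℝ (Icc θL θH) (u - tangentLine u u' m) :=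
    hu.convex_middle.convexOn.sub (concaveOn_tangentLine (convex_Icc _ _))
  have hθ : θL ∈ Icc θL θH := ⟨le_rfl, hu.inflection_lt.le⟩
  have hleft : (u - tangentLine u u' m) θL ≤ (u - tangentLine u u' m) x := by
    have := hu.le_tangentLine_of_le_tangentLine_right ⟨hx.1.le, hx.2⟩ hm htangent.ge
      ⟨hu.left_lt.le, hx.1.le⟩
    simpa [htangent] using this
  intro s hs t ht hst
  have hx_le : (u - tangentLine u u' m) x ≤ (u - tangentLine u u' m) s :=
    hconvex.le_right_of_left_le'' hθ ⟨hx.1.le.trans hs.1, hs.2⟩ hx.1 hs.1 hleft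
  exact hconvex.le_right_of_left_le'' hθ ⟨hx.1.le.trans ht.1, ht.2⟩ (hx.1.trans_le hs.1) hst
    (hleft.trans hx_le)

/-- The optimal price function follows the tangent line up to `x` and `u` afterwards. -/
lemma le_poolPayoff_add_integral (hu : ConcaveConvexConcave u u' a θL θH b)
    (hf : PosDensityOn f a c) (hx : x ∈ Ioc θL c) (hc : c ≤ θH)
    (htangent : tangentLine u u' (condMean f a x) x = u x) (hV : LeDualValue f u a c V) :
    V ≤ poolPayoff f u a x + ∫ t in x..c, u t * f t := by
  have hax : a < x := hu.left_lt.trans hx.1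
  have hfx : PosDensityOn f a x := hf.mono le_rfl hx.2
  set ℓ := tangentLine u u' (condMean f a x)
  have hm : condMean f a x ∈ Ico a x := Ioo_subset_Ico_self (hfx.condMean_mem_Ioo hax)
  have huc : ContinuousOn u (Icc a c) :=
    hu.continuousOn.mono (Icc_subset_Icc_right (hc.trans hu.lt_right.le))
  have hℓ : Continuous ℓ := continuous_tangentLine u u' _
  let p : ℝ → ℝ := fun t => ℓ t + (u - ℓ) (max t x)
  have hp_left : ∀ t ≤ x, p t = ℓ t := fun t ht => by simp [p, max_eq_right ht, htangent]
  have hp_right : ∀ t, x ≤ t → p t = u t := fun t ht => by simp [p, max_eq_left ht]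
  have hpc : ContinuousOn p (Icc a c) := hℓ.continuousOn.add <|
    (huc.sub hℓ.continuousOn).comp (by fun_prop)
      fun t ht => ⟨ht.1.trans (le_max_left t x), max_le ht.2 hx.2⟩
  have hp : ConvexOn ℝ (Icc a c) p :=
    (convexOn_tangentLine (convex_Icc a c)).add <| convexOn_comp_max hax.le hx.2
      ((hu.convex_middle.convexOn.sub (concaveOn_tangentLine (convex_Icc _ _))).subset
        (Icc_subset_Icc hx.1.le hc) (convex_Icc x c))
      ((hu.monotoneOn_sub_tangentLine ⟨hx.1, hx.2.trans hc⟩ hm htangent).mono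
        (Icc_subset_Icc_right hc))
  have hup : ∀ t ∈ Icc a c, u t ≤ p t := fun t ht => by
    rcases le_total t x with htx | htx
    · exact (hu.le_tangentLine_of_le_tangentLine_right ⟨hx.1.le, hx.2.trans hc⟩ hm htangent.ge
        ⟨ht.1, htx⟩).trans_eq (hp_left t htx).symm
    · exact (hp_right t htx).ge
  exact (hV p hp hpc hup).trans_eq <| hf.integral_eq_poolPayoff_add_integral hax.le hx.2 hpc
    (fun t ht => hp_left t ht.2) fun t ht => hp_right t ht.1

lemma exists_tangentLine_eq (hu : ConcaveConvexConcave u u' a θL θH b)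
    (hf : PosDensityOn f a b) (hc : c ∈ Icc θL θH)
    (hlt : tangentLine u u' (condMean f a c) c < u c) :
    ∃ x ∈ Ioo θL c, tangentLine u u' (condMean f a x) x = u x := by
  have hsub : Icc θL c ⊆ Icc a b \ {a} := fun x hx =>
    ⟨⟨hu.left_lt.le.trans hx.1, hx.2.trans (hc.2.trans hu.lt_right.le)⟩,
      (hu.left_lt.trans_le hx.1).ne'⟩
  have hmean : ∀ x ∈ Icc θL c, condMean f a x ∈ Ioo a x := fun x hx =>
    (hf.mono le_rfl (hsub hx).1.2).condMean_mem_Ioo (hu.left_lt.trans_le hx.1)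
  have hmaps : MapsTo (condMean f a) (Icc θL c) (Icc a b) := fun x hx =>
    ⟨(hmean x hx).1.le, (hmean x hx).2.le.trans (hsub hx).1.2⟩
  have hcm : ContinuousOn (condMean f a) (Icc θL c) :=
    (hf.continuousOn_condMean ⟨le_rfl, (hsub ⟨le_rfl, hc.1⟩).1.1.trans
      (hsub ⟨le_rfl, hc.1⟩).1.2⟩).mono hsub
  have hcont : ContinuousOn (fun x => u x - tangentLine u u' (condMean f a x) x) (Icc θL c) :=
    (hu.continuousOn.mono fun x hx => (hsub hx).1).sub <|
      (hu.continuousOn.comp hcm hmaps).add <|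
        (hu.continuousOn_deriv.comp hcm hmaps).mul (continuousOn_id.sub hcm)
  have hθ : θL ∈ Icc θL c := ⟨le_rfl, hc.1⟩
  have hleft : u θL < tangentLine u u' (condMean f a θL) θL :=
    lt_tangentLine_of_strictConcaveOn hu.concave_left (Ioo_subset_Icc_self (hmean θL hθ))
      ⟨hu.left_lt.le, le_rfl⟩ (hmean θL hθ).2.ne (hu.hasDerivAt _ (hmaps hθ))
  obtain ⟨x, hx, hzero⟩ :=
    intermediate_value_Ioo hc.1 hcont ⟨sub_neg.2 hleft, sub_pos.2 hlt⟩
  exact ⟨x, hx, (sub_eq_zero.1 hzero).symm⟩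

lemma le_poolPayoff_or_exists_left (hu : ConcaveConvexConcave u u' a θL θH b)
    (hf : PosDensityOn f a b) (hc : c ∈ Icc θL θH) (hV : LeDualValue f u a c V) :
    V ≤ poolPayoff f u a c ∨ ∃ x ∈ Ioo θL c, tangentLine u u' (condMean f a x) x = u x ∧
      V ≤ poolPayoff f u a x + ∫ t in x..c, u t * f t := by
  have hac : a < c := hu.left_lt.trans_le hc.1
  have hfc : PosDensityOn f a c := hf.mono le_rfl (hc.2.trans hu.lt_right.le)
  rcases le_or_gt (u c) (tangentLine u u' (condMean f a c) c) with hle | hlt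
  · exact .inl <| hV.le_poolPayoff hfc hac.le fun t ht =>
      hu.le_tangentLine_of_le_tangentLine_right hc
        (Ioo_subset_Ico_self (hfc.condMean_mem_Ioo hac)) hle ht
  · obtain ⟨x, hx, htangent⟩ := hu.exists_tangentLine_eq hf hc hlt
    exact .inr ⟨x, hx, htangent,
      hu.le_poolPayoff_add_integral hfc ⟨hx.1, hx.2.le⟩ hc.2 htangent hV⟩

lemma le_poolPayoff_or_exists_right (hu : ConcaveConvexConcave u u' a θL θH b)
    (hf : PosDensityOn f a b) (hc : c ∈ Icc θL θH) (hV : LeDualValue f u c b V) :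
    V ≤ poolPayoff f u c b ∨ ∃ y ∈ Ioo c θH, tangentLine u u' (condMean f y b) y = u y ∧
      V ≤ (∫ t in c..y, u t * f t) + poolPayoff f u y b := by
  rcases hu.comp_neg.le_poolPayoff_or_exists_left hf.comp_neg
    ⟨neg_le_neg hc.2, neg_le_neg hc.1⟩ hV.comp_neg with hle | ⟨x, hx, htangent, hle⟩
  · left
    simpa only [poolPayoff_comp_neg, neg_neg] using hle
  · rw [tangentLine_comp_neg, condMean_comp_neg, neg_neg, neg_neg] at htangent
    rw [poolPayoff_comp_neg, neg_neg,
      intervalIntegral.integral_comp_neg (fun t => u t * f t), neg_neg, add_comm] at hle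
    exact .inr ⟨-x, ⟨lt_neg.1 hx.2, neg_lt.1 hx.1⟩, htangent, hle⟩

end ConcaveConvexConcave

/-! ### Splits into two and three pools -/

/-- The configuration excluded in the theorem: cutoffs `x < y` in the convex region such that the
tangent line at the mean of `(a, x)` meets `u` at `x` and the tangent line at the mean of `(y, b)`
meets `u` at `y`. -/
def HasTangencyPair (f u u' : ℝ → ℝ) (a θL θH b : ℝ) : Prop :=
  ∃ x ∈ Ioo θL θH, ∃ y ∈ Ioo θL θH, x < y ∧
    tangentLine u u' (condMean f a x) x = u x ∧ tangentLine u u' (condMean f y b) y = u y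

namespace ConcaveConvexConcave

variable {f u u' : ℝ → ℝ} {a b c m ξ ζ V₁ V₂ θL θH : ℝ}

/-- If one of the two one-sided problems has its optimum at a tangency cutoff, re-solving the
opposite problem up to that cutoff must produce a single pool. -/
lemma exists_add_le_twoPoolPayoff (hu : ConcaveConvexConcave u u' a θL θH b)
    (hf : PosDensityOn f a b) (hpair : ¬ HasTangencyPair f u u' a θL θH b) (hc : c ∈ Icc θL θH)
    (hV₁ : LeDualValue f u a c V₁) (hV₂ : LeDualValue f u c b V₂) :
    ∃ z ∈ Icc a b, V₁ + V₂ ≤ twoPoolPayoff f u a b z := by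
  have hac : a < c := hu.left_lt.trans_le hc.1
  have hcb : c < b := hc.2.trans_lt hu.lt_right
  rcases hu.le_poolPayoff_or_exists_left hf hc hV₁ with hleft | ⟨x, hx, hxt, hleft⟩
  · rcases hu.le_poolPayoff_or_exists_right hf hc hV₂ with hright | ⟨y, hy, hyt, hright⟩
    · exact ⟨c, ⟨hac.le, hcb.le⟩, add_le_add hleft hright⟩
    have hyb : y < b := hy.2.trans hu.lt_right
    have hV := hV₁.add (leDualValue_integral (hf.mono hac.le hyb.le) hy.1.le
      (hu.continuousOn.mono (Icc_subset_Icc hac.le hyb.le))) (hf.mono le_rfl hyb.le) hac.le hy.1.le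
    rcases hu.le_poolPayoff_or_exists_left hf ⟨hc.1.trans hy.1.le, hy.2.le⟩ hV with
      hpool | ⟨x, hx, hxt, -⟩
    · exact ⟨y, ⟨hac.le.trans hy.1.le, hyb.le⟩, by unfold twoPoolPayoff; linarith⟩
    · exact absurd
        ⟨x, ⟨hx.1, hx.2.trans hy.2⟩, y, ⟨hc.1.trans_lt hy.1, hy.2⟩, hx.2, hxt, hyt⟩ hpair
  · have hax : a < x := hu.left_lt.trans hx.1
    have hV := (leDualValue_integral (hf.mono hax.le hcb.le) hx.2.le
      (hu.continuousOn.mono (Icc_subset_Icc hax.le hcb.le))).add hV₂ (hf.mono hax.le le_rfl)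
      hx.2.le hcb.le
    rcases hu.le_poolPayoff_or_exists_right hf ⟨hx.1.le, hx.2.le.trans hc.2⟩ hV with
      hpool | ⟨y, hy, hyt, -⟩
    · exact ⟨x, ⟨hax.le, hx.2.le.trans hcb.le⟩, by unfold twoPoolPayoff; linarith⟩
    · exact absurd
        ⟨x, ⟨hx.1, hx.2.trans_le hc.2⟩, y, ⟨hx.1.trans hy.1, hy.2⟩, hy.1, hxt, hyt⟩ hpair

lemma tangentLine_le_of_mem_middle (hu : ConcaveConvexConcave u u' a θL θH b)
    (hm : m ∈ Icc θL θH) {t : ℝ} (ht : t ∈ Icc θL θH) : tangentLine u u' m t ≤ u t :=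
  tangentLine_le_of_convexOn hu.convex_middle.convexOn hm ht
    (hu.hasDerivAt m ⟨hu.left_lt.le.trans hm.1, hm.2.trans hu.lt_right.le⟩)

lemma convexOn_tangentLine_sub (hu : ConcaveConvexConcave u u' a θL θH b) (m : ℝ) :
    ConvexOn ℝ (Icc a θL) (tangentLine u u' m - u) :=
  (convexOn_tangentLine (convex_Icc _ _)).sub hu.concave_left.concaveOn

lemma le_tangentLine_of_mem_left (hu : ConcaveConvexConcave u u' a θL θH b)
    (hm : m ∈ Icc θL θH) (hξ : ξ ∈ Icc a θL) (hξm : ξ < m) (hle : u ξ ≤ tangentLine u u' m ξ)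
    {t : ℝ} (ht : t ∈ Icc a ξ) : u t ≤ tangentLine u u' m t := by
  have hθ : θL ∈ Icc θL θH := ⟨le_rfl, hu.inflection_lt.le⟩
  have hξθ : ξ < θL := by
    refine hξ.2.lt_of_ne fun h => hle.not_gt ?_
    exact tangentLine_lt_of_strictConvexOn hu.convex_middle hm (h ▸ hθ) hξm.ne'
      (hu.hasDerivAt m ⟨hu.left_lt.le.trans hm.1, hm.2.trans hu.lt_right.le⟩)
  have hdecr : (tangentLine u u' m - u) ξ ≤ (tangentLine u u' m - u) t :=
    (hu.convexOn_tangentLine_sub m).le_left_of_right_le'' ⟨ht.1, ht.2.trans hξ.2⟩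
      ⟨hu.left_lt.le, le_rfl⟩ ht.2 hξθ
      ((sub_nonpos.2 (hu.tangentLine_le_of_mem_middle hm hθ)).trans (sub_nonneg.2 hle))
  exact sub_nonneg.1 ((sub_nonneg.2 hle).trans hdecr)

/-- Either the tangent line at the mean `m` of `(ξ, ζ)` or the one at the mean of the merged pool
`(a, ζ)` lies above `u` at both separate means and supports `u` at the merged one. -/
lemma poolPayoff_merge_left (hu : ConcaveConvexConcave u u' a θL θH b) (hf : PosDensityOn f a ζ)
    (hξ : ξ ∈ Icc a θL) (hξζ : ξ < ζ) (hm : condMean f ξ ζ ∈ Icc θL θH)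
    (hle : u ξ ≤ tangentLine u u' (condMean f ξ ζ) ξ) :
    poolPayoff f u a ξ + poolPayoff f u ξ ζ ≤ poolPayoff f u a ζ := by
  set m := condMean f ξ ζ with hm_def
  have hξm : ξ < m := ((hf.mono hξ.1 le_rfl).condMean_mem_Ioo hξζ).1
  have hmean (h : a < ξ) : condMean f a ξ ∈ Icc a ξ :=
    (hf.mono le_rfl hξζ.le).condMean_mem_Icc h
  set M := condMean f a ζ
  have hM : a < M := (hf.condMean_mem_Ioo (hξ.1.trans_lt hξζ)).1
  have hMm : M ≤ m := hf.condMean_le_condMean_left hξ.1 hξζ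
  rcases le_or_gt (tangentLine u u' m M) (u M) with hMle | hMlt
  · exact hf.poolPayoff_add_le hξ.1 hξζ.le
      (fun h => hu.le_tangentLine_of_mem_left hm hξ hξm hle (hmean h))
      (fun _ => by rw [← hm_def, tangentLine_self]) fun _ => hMle
  · have hMθ : M < θL := by
      by_contra! h
      exact hMlt.not_ge (hu.tangentLine_le_of_mem_middle hm ⟨h, hMm.trans hm.2⟩)
    have hconcave : ∀ t ∈ Icc a θL, u t ≤ tangentLine u u' M t := fun t ht =>
      le_tangentLine_of_concaveOn hu.concave_left.concaveOn ⟨hM.le, hMθ.le⟩ ht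
        (hu.hasDerivAt M ⟨hM.le, by linarith [hu.inflection_lt, hu.lt_right]⟩)
    have hθ : tangentLine u u' m θL ≤ tangentLine u u' M θL :=
      (hu.tangentLine_le_of_mem_middle hm ⟨le_rfl, hu.inflection_lt.le⟩).trans
        (hconcave θL ⟨hu.left_lt.le, le_rfl⟩)
    have hslope : u' m ≤ u' M := by
      unfold tangentLine at hθ hMlt
      nlinarith
    refine hf.poolPayoff_add_le (m := M) hξ.1 hξζ.le
      (fun h => hconcave _ ⟨(hmean h).1, (hmean h).2.trans hξ.2⟩) (fun _ => ?_)
      fun _ => (tangentLine_self u u' M).le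
    unfold tangentLine at hθ ⊢
    nlinarith [hm.1]

lemma tangentLine_le_of_le_left (hu : ConcaveConvexConcave u u' a θL θH b)
    (hm : m ∈ Icc θL θH) (hξ : ξ ∈ Icc a θL) (hle : tangentLine u u' m ξ ≤ u ξ)
    {t : ℝ} (ht : t ∈ Icc ξ θH) : tangentLine u u' m t ≤ u t := by
  rcases le_total t θL with htθ | htθ
  · have hmax := (hu.convexOn_tangentLine_sub m).le_max_of_mem_Icc hξ ⟨hu.left_lt.le, le_rfl⟩
      ⟨ht.1, htθ⟩
    exact sub_nonpos.1 <| hmax.trans <| max_le (sub_nonpos.2 hle) <| sub_nonpos.2 <|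
      hu.tangentLine_le_of_mem_middle hm ⟨le_rfl, hu.inflection_lt.le⟩
  · exact hu.tangentLine_le_of_mem_middle hm ⟨htθ, ht.2⟩

lemma poolPayoff_add_le_move_cut (hu : ConcaveConvexConcave u u' a θL θH b)
    (hf : PosDensityOn f a ζ) (hξ : a ≤ ξ) (hcζ : c < ζ) (hm : condMean f ξ ζ ∈ Icc θL θH)
    (hle : tangentLine u u' (condMean f ξ ζ) ξ ≤ u ξ) (hc : c ∈ Icc ξ θL)
    (hcm : condMean f c ζ ≤ θH) :
    poolPayoff f u a ξ + poolPayoff f u ξ ζ ≤ poolPayoff f u a c + poolPayoff f u c ζ := by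
  have hξθ : ξ ≤ θL := hc.1.trans hc.2
  have hfac : PosDensityOn f a c := hf.mono le_rfl hcζ.le
  have hfξζ : PosDensityOn f ξ ζ := hf.mono hξ le_rfl
  have hmean_cut (h : ξ < c) : condMean f ξ c ∈ Icc ξ c :=
    (hfξζ.mono le_rfl hcζ.le).condMean_mem_Icc h
  have hmean_left (h : a < ξ) : condMean f a ξ ∈ Icc a ξ :=
    (hfac.mono le_rfl hc.1).condMean_mem_Icc h
  have hmean_right : condMean f c ζ ∈ Icc c ζ := (hfξζ.mono hc.1 le_rfl).condMean_mem_Icc hcζ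
  have hsplit : poolPayoff f u ξ ζ ≤ poolPayoff f u ξ c + poolPayoff f u c ζ :=
    hfξζ.poolPayoff_le_add (u' := u') hc.1 hcζ.le
      (fun h => hu.tangentLine_le_of_le_left hm ⟨hξ, hξθ⟩ hle
        ⟨(hmean_cut h).1, (hmean_cut h).2.trans (hc.2.trans hu.inflection_lt.le)⟩)
      fun _ => hu.tangentLine_le_of_le_left hm ⟨hξ, hξθ⟩ hle ⟨hc.1.trans hmean_right.1, hcm⟩
  have hmerge : poolPayoff f u a ξ + poolPayoff f u ξ c ≤ poolPayoff f u a c :=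
    hfac.poolPayoff_add_le_of_concaveOn hξ hc.1 hu.concave_left.concaveOn
      (fun h => ⟨(hmean_left h).1, (hmean_left h).2.trans hξθ⟩)
      fun h => ⟨hξ.trans (hmean_cut h).1, (hmean_cut h).2.trans hc.2⟩
  linarith

/-- The left end of the middle pool moves right to `θL`, or until the mean of that pool reaches
`θH`; in the latter case the pool is merged with the one on its right by concavity. -/
lemma exists_threePool_le_of_tangentLine_le (hu : ConcaveConvexConcave u u' a θL θH b)
    (hf : PosDensityOn f a b) (hpair : ¬ HasTangencyPair f u u' a θL θH b)
    (hξ : ξ ∈ Icc a θL) (hζ : ζ ∈ Icc θH b) (hm : condMean f ξ ζ ∈ Icc θL θH)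
    (hle : tangentLine u u' (condMean f ξ ζ) ξ ≤ u ξ) :
    ∃ z ∈ Icc a b, poolPayoff f u a ξ + poolPayoff f u ξ ζ + poolPayoff f u ζ b ≤
      twoPoolPayoff f u a b z := by
  have hθζ : θL < ζ := hu.inflection_lt.trans_le hζ.1
  have hmove := fun c (hc : c ∈ Icc ξ θL) => hu.poolPayoff_add_le_move_cut
    (hf.mono le_rfl hζ.2) hξ.1 (hc.2.trans_lt hθζ) hm hle hc
  rcases le_or_gt (condMean f θL ζ) θH with hθ | hθ
  · obtain ⟨z, hz, hzle⟩ := hu.exists_add_le_twoPoolPayoff hf hpair (c := θL)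
      ⟨le_rfl, hu.inflection_lt.le⟩
      (leDualValue_poolPayoff (hf.mono le_rfl (hθζ.le.trans hζ.2)) hu.left_lt.le)
      ((leDualValue_poolPayoff (hf.mono hu.left_lt.le hζ.2) hθζ.le).add
        (leDualValue_poolPayoff (hf.mono (hu.left_lt.le.trans hθζ.le) le_rfl) hζ.2)
        (hf.mono hu.left_lt.le le_rfl) hθζ.le hζ.2)
    exact ⟨z, hz, by linarith [hmove θL ⟨hξ.2, le_rfl⟩ hθ]⟩
  · obtain ⟨c, hc, hcm⟩ := (hf.mono hξ.1 hζ.2).exists_condMean_left_eq hξ.2 hθζ ⟨hm.2, hθ.le⟩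
    have hcζ : c ≤ ζ := hc.2.trans hθζ.le
    have hac : a ≤ c := hξ.1.trans hc.1
    have hmerge : poolPayoff f u c ζ + poolPayoff f u ζ b ≤ poolPayoff f u c b :=
      (hf.mono hac le_rfl).poolPayoff_add_le_of_concaveOn hcζ hζ.2 hu.concave_right.concaveOn
        (fun _ => ⟨hcm.ge, hcm.trans_le hu.lt_right.le⟩)
        fun h => Icc_subset_Icc_left hζ.1 ((hf.mono (hac.trans hcζ) le_rfl).condMean_mem_Icc h)
    exact ⟨c, ⟨hac, hcζ.trans hζ.2⟩, by unfold twoPoolPayoff; linarith [hmove c hc hcm.le]⟩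

lemma exists_threePool_le_twoPoolPayoff (hu : ConcaveConvexConcave u u' a θL θH b)
    (hf : PosDensityOn f a b) (hpair : ¬ HasTangencyPair f u u' a θL θH b)
    (hξ : ξ ∈ Icc a θL) (hζ : ζ ∈ Icc θH b) :
    ∃ z ∈ Icc a b, poolPayoff f u a ξ + poolPayoff f u ξ ζ + poolPayoff f u ζ b ≤
      twoPoolPayoff f u a b z := by
  have hξζ : ξ < ζ := by linarith [hξ.2, hζ.1, hu.inflection_lt]
  have hfaζ : PosDensityOn f a ζ := hf.mono le_rfl hζ.2
  have hfξb : PosDensityOn f ξ b := hf.mono hξ.1 le_rfl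
  have hm := (hf.mono hξ.1 hζ.2).condMean_mem_Icc hξζ
  have hmemξ : ξ ∈ Icc a b := ⟨hξ.1, hξζ.le.trans hζ.2⟩
  have hmemζ : ζ ∈ Icc a b := ⟨hξ.1.trans hξζ.le, hζ.2⟩
  rcases le_total (condMean f ξ ζ) θL with hmL | hmL
  · refine ⟨ζ, hmemζ, add_le_add_left ?_ _⟩
    exact hfaζ.poolPayoff_add_le_of_concaveOn hξ.1 hξζ.le hu.concave_left.concaveOn
      (fun h => Icc_subset_Icc_right hξ.2 ((hfaζ.mono le_rfl hξζ.le).condMean_mem_Icc h))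
      fun _ => ⟨hξ.1.trans hm.1, hmL⟩
  rcases le_total θH (condMean f ξ ζ) with hmH | hmH
  · refine ⟨ξ, hmemξ, ?_⟩
    rw [add_assoc]
    refine add_le_add_right ?_ _
    exact hfξb.poolPayoff_add_le_of_concaveOn hξζ.le hζ.2 hu.concave_right.concaveOn
      (fun _ => ⟨hmH, hm.2.trans hζ.2⟩)
      fun h => Icc_subset_Icc_left hζ.1 ((hfξb.mono hξζ.le le_rfl).condMean_mem_Icc h)
  rcases le_total (u ξ) (tangentLine u u' (condMean f ξ ζ) ξ) with hle | hle
  · exact ⟨ζ, hmemζ, add_le_add_left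
      (hu.poolPayoff_merge_left hfaζ hξ hξζ ⟨hmL, hmH⟩ hle) _⟩
  · exact hu.exists_threePool_le_of_tangentLine_le hf hpair hξ hζ ⟨hmL, hmH⟩ hle

end ConcaveConvexConcave

/-! ### Pooling sets -/

lemma PosDensityOn.integrableOn_comp_mul {f g u : ℝ → ℝ} {a b c d : ℝ} (hf : PosDensityOn f a b)
    (hu : ContinuousOn u (Icc c d)) (hg : Measurable g) (hmaps : MapsTo g (Icc a b) (Icc c d)) :
    IntegrableOn (fun t => u (g t) * f t) (Icc a b) := by
  obtain ⟨C, hC⟩ := isCompact_Icc.exists_bound_of_continuousOn hu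
  refine hf.integrableOn.bdd_mul (c := C) ?_ ?_
  · have hpiecewise : Measurable ((Icc c d).piecewise u 0) :=
      hu.measurable_piecewise continuousOn_const measurableSet_Icc
    refine (hpiecewise.comp hg).aestronglyMeasurable.congr ?_
    filter_upwards [ae_restrict_mem measurableSet_Icc] with t ht
    exact piecewise_eq_of_mem _ _ _ (hmaps ht)
  · filter_upwards [ae_restrict_mem measurableSet_Icc] with t ht
    exact hC _ (hmaps ht)

section Components

variable {s : Set ℝ} {a b c θ : ℝ}

lemma connectedComponentIn_subset_Iic_of_notMem (hc : c ∉ s) (hθ : θ ≤ c) :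
    connectedComponentIn s θ ⊆ Iic c := by
  intro t ht
  by_contra hct
  have hmem : θ ∈ connectedComponentIn s θ :=
    mem_connectedComponentIn (connectedComponentIn_nonempty_iff.1 ⟨t, ht⟩)
  exact hc (connectedComponentIn_subset s θ
    (isPreconnected_connectedComponentIn.ordConnected.out hmem ht ⟨hθ, (not_le.1 hct).le⟩))

lemma connectedComponentIn_subset_Ici_of_notMem (hc : c ∉ s) (hθ : c ≤ θ) :
    connectedComponentIn s θ ⊆ Ici c := by
  intro t ht
  by_contra hct
  have hmem : θ ∈ connectedComponentIn s θ :=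
    mem_connectedComponentIn (connectedComponentIn_nonempty_iff.1 ⟨t, ht⟩)
  exact hc (connectedComponentIn_subset s θ
    (isPreconnected_connectedComponentIn.ordConnected.out ht hmem ⟨(not_le.1 hct).le, hθ⟩))

lemma setIntegral_eq_intervalIntegral {φ : ℝ → ℝ} (hab : a ≤ b) (hlo : Ioo a b ⊆ s)
    (hhi : s ⊆ Icc a b) : ∫ t in s, φ t = ∫ t in a..b, φ t := by
  rw [intervalIntegral.integral_of_le hab]
  refine setIntegral_congr_set (Filter.EventuallyLE.antisymm ?_ ?_)
  · exact hhi.eventuallyLE.trans Ioc_ae_eq_Icc.symm.le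
  · exact Ioo_ae_eq_Ioc.symm.le.trans hlo.eventuallyLE

lemma setIntegral_nonneg_of_connectedComponentIn {φ : ℝ → ℝ} (hφ : IntegrableOn φ s)
    (hs : ∀ θ ∈ s, (interior (connectedComponentIn s θ)).Nonempty)
    (hnonneg : ∀ θ ∈ s, 0 ≤ ∫ t in connectedComponentIn s θ, φ t) : 0 ≤ ∫ t in s, φ t := by
  set K : Set (Set ℝ) := connectedComponentIn s '' s
  have hdisj : K.PairwiseDisjoint id := by
    rintro _ ⟨x, -, rfl⟩ _ ⟨y, -, rfl⟩ hne
    refine Set.disjoint_left.2 fun t htx hty => hne ?_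
    exact (connectedComponentIn_eq htx).trans (connectedComponentIn_eq hty).symm
  have hcount : Countable K :=
    hdisj.countable_of_nonempty_interior (by rintro _ ⟨x, hx, rfl⟩; exact hs x hx)
  have hunion : ⋃ C : K, (C : Set ℝ) = s := by
    refine (iUnion_subset ?_).antisymm fun t ht =>
      mem_iUnion.2 ⟨⟨_, t, ht, rfl⟩, mem_connectedComponentIn ht⟩
    rintro ⟨_, x, -, rfl⟩
    exact connectedComponentIn_subset s x
  have hsum := hasSum_integral_iUnion (μ := volume) (s := fun C : K => (C : Set ℝ)) (f := φ)
    (by rintro ⟨_, x, -, rfl⟩; exact isPreconnected_connectedComponentIn.ordConnected.measurableSet)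
    (fun C D hCD => hdisj C.2 D.2 fun h => hCD (Subtype.ext h)) (by rwa [hunion])
  rw [hunion] at hsum
  refine hsum.nonneg ?_
  rintro ⟨_, x, hx, rfl⟩
  exact hnonneg x hx

end Components

/-- No component of `P` has points on both sides of `c`: the pools of `P` can be treated separately
on the left and on the right of `c`. -/
def IsCut (P : Set ℝ) (c : ℝ) : Prop :=
  ∀ θ ∈ P, connectedComponentIn P θ ⊆ Iic c ∨ connectedComponentIn P θ ⊆ Ici c

lemma isCut_of_notMem {P : Set ℝ} {c : ℝ} (hc : c ∉ P) : IsCut P c := fun θ _ =>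
  (le_total θ c).imp (connectedComponentIn_subset_Iic_of_notMem hc)
    (connectedComponentIn_subset_Ici_of_notMem hc)

lemma le_compInf {P : Set ℝ} {c θ : ℝ} (hθ : θ ∈ P)
    (hc : connectedComponentIn P θ ⊆ Ici c) : c ≤ compInf P θ :=
  le_csInf ⟨θ, mem_connectedComponentIn hθ⟩ hc

lemma compSup_le {P : Set ℝ} {c θ : ℝ} (hθ : θ ∈ P)
    (hc : connectedComponentIn P θ ⊆ Iic c) : compSup P θ ≤ c :=
  csSup_le ⟨θ, mem_connectedComponentIn hθ⟩ hc

lemma poolMean_eq_of_mem {f : ℝ → ℝ} {P : Set ℝ} {t θ : ℝ}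
    (ht : t ∈ connectedComponentIn P θ) :
    poolMean f P t = condMean f (compInf P θ) (compSup P θ) := by
  rw [poolMean, if_pos (connectedComponentIn_subset P θ ht), compInf, compSup, compInf, compSup,
    connectedComponentIn_eq ht]

namespace IsPoolingSet

variable {f u : ℝ → ℝ} {P : Set ℝ} {a b c θ : ℝ}

lemma subset_Icc (hP : IsPoolingSet P) : P ⊆ Icc 0 1 := by
  obtain ⟨U, -, rfl⟩ := hP
  exact inter_subset_right

lemma measurableSet (hP : IsPoolingSet P) : MeasurableSet P := by
  obtain ⟨U, hU, rfl⟩ := hP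
  exact hU.measurableSet.inter measurableSet_Icc

lemma interior_connectedComponentIn_nonempty (hP : IsPoolingSet P) (hθ : θ ∈ P) :
    (interior (connectedComponentIn P θ)).Nonempty := by
  obtain ⟨U, hU, rfl⟩ := hP
  have hsub : connectedComponentIn U θ ∩ Icc 0 1 ⊆ connectedComponentIn (U ∩ Icc 0 1) θ :=
    (isPreconnected_connectedComponentIn.ordConnected.inter
      ordConnected_Icc).isPreconnected.subset_connectedComponentIn
      ⟨mem_connectedComponentIn hθ.1, hθ.2⟩
      (inter_subset_inter_left _ (connectedComponentIn_subset U θ))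
  have hopen : IsOpen (connectedComponentIn U θ) := hU.connectedComponentIn
  have hclosure : θ ∈ closure (Ioo (0 : ℝ) 1) := by
    rw [closure_Ioo zero_ne_one]
    exact hθ.2
  refine (mem_closure_iff.1 hclosure _ hopen (mem_connectedComponentIn hθ.1)).mono ?_
  exact interior_maximal ((inter_subset_inter_right _ Ioo_subset_Icc_self).trans hsub)
    (hopen.inter isOpen_Ioo)

lemma bddBelow_connectedComponentIn (hP : IsPoolingSet P) (θ : ℝ) :
    BddBelow (connectedComponentIn P θ) :=
  bddBelow_Icc.mono ((connectedComponentIn_subset P θ).trans hP.subset_Icc)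

lemma bddAbove_connectedComponentIn (hP : IsPoolingSet P) (θ : ℝ) :
    BddAbove (connectedComponentIn P θ) :=
  bddAbove_Icc.mono ((connectedComponentIn_subset P θ).trans hP.subset_Icc)

lemma connectedComponentIn_subset_Icc (hP : IsPoolingSet P) (θ : ℝ) :
    connectedComponentIn P θ ⊆ Icc (compInf P θ) (compSup P θ) :=
  subset_Icc_csInf_csSup (hP.bddBelow_connectedComponentIn θ) (hP.bddAbove_connectedComponentIn θ)

lemma Ioo_subset_connectedComponentIn (hP : IsPoolingSet P) (hθ : θ ∈ P) :
    Ioo (compInf P θ) (compSup P θ) ⊆ connectedComponentIn P θ :=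
  (isConnected_connectedComponentIn_iff.2 hθ).Ioo_csInf_csSup_subset
    (hP.bddBelow_connectedComponentIn θ) (hP.bddAbove_connectedComponentIn θ)

lemma compInf_lt_compSup (hP : IsPoolingSet P) (hθ : θ ∈ P) : compInf P θ < compSup P θ := by
  by_contra! hle
  have hsub := hP.connectedComponentIn_subset_Icc θ
  have hempty : interior (connectedComponentIn P θ) ⊆ ∅ := by
    rw [← interior_singleton (compInf P θ)]
    exact interior_mono fun t ht =>
      le_antisymm ((hsub ht).2.trans hle) (hsub ht).1
  obtain ⟨t, ht⟩ := hP.interior_connectedComponentIn_nonempty hθ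
  exact hempty ht

lemma isCut_zero (hP : IsPoolingSet P) : IsCut P 0 := fun θ _ =>
  .inr fun _ ht => (hP.subset_Icc (connectedComponentIn_subset P θ ht)).1

lemma isCut_one (hP : IsPoolingSet P) : IsCut P 1 := fun θ _ =>
  .inl fun _ ht => (hP.subset_Icc (connectedComponentIn_subset P θ ht)).2

lemma zero_le_compInf (hP : IsPoolingSet P) (hθ : θ ∈ P) : 0 ≤ compInf P θ :=
  le_compInf hθ fun _ ht => (hP.subset_Icc (connectedComponentIn_subset P θ ht)).1

lemma compSup_le_one (hP : IsPoolingSet P) (hθ : θ ∈ P) : compSup P θ ≤ 1 :=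
  compSup_le hθ fun _ ht => (hP.subset_Icc (connectedComponentIn_subset P θ ht)).2

lemma isCut_compInf (hP : IsPoolingSet P) (hθ : θ ∈ P) : IsCut P (compInf P θ) := by
  intro η _
  by_contra! hη
  obtain ⟨⟨t, ht, hlt⟩, s, hs, hgt⟩ := And.imp not_subset.1 not_subset.1 hη
  obtain ⟨x, hx, hxt⟩ := exists_lt_of_csInf_lt ⟨θ, mem_connectedComponentIn hθ⟩ (not_le.1 hlt)
  have hinf : compInf P θ ≤ x := csInf_le (hP.bddBelow_connectedComponentIn θ) hx
  have hxη : x ∈ connectedComponentIn P η :=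
    isPreconnected_connectedComponentIn.ordConnected.out hs ht
      ⟨(not_le.1 hgt).le.trans hinf, hxt.le⟩
  rw [connectedComponentIn_eq hxη, ← connectedComponentIn_eq hx] at hs
  exact hgt (csInf_le (hP.bddBelow_connectedComponentIn θ) hs)

lemma isCut_compSup (hP : IsPoolingSet P) (hθ : θ ∈ P) : IsCut P (compSup P θ) := by
  intro η _
  by_contra! hη
  obtain ⟨⟨t, ht, hlt⟩, s, hs, hgt⟩ := And.imp not_subset.1 not_subset.1 hη
  obtain ⟨x, hx, hsx⟩ := exists_lt_of_lt_csSup ⟨θ, mem_connectedComponentIn hθ⟩ (not_le.1 hgt)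
  have hsup : x ≤ compSup P θ := le_csSup (hP.bddAbove_connectedComponentIn θ) hx
  have hxη : x ∈ connectedComponentIn P η :=
    isPreconnected_connectedComponentIn.ordConnected.out hs ht
      ⟨hsx.le, hsup.trans (not_le.1 hlt).le⟩
  rw [connectedComponentIn_eq hxη, ← connectedComponentIn_eq hx] at ht
  exact hlt (le_csSup (hP.bddAbove_connectedComponentIn θ) ht)

lemma poolMean_mem_Icc (hP : IsPoolingSet P) (hf : PosDensityOn f 0 1) (hθ : θ ∈ P) :
    poolMean f P θ ∈ Icc (compInf P θ) (compSup P θ) := by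
  rw [poolMean, if_pos hθ]
  exact (hf.mono (hP.zero_le_compInf hθ) (hP.compSup_le_one hθ)).condMean_mem_Icc
    (hP.compInf_lt_compSup hθ)

lemma poolMean_le_of_notMem (hP : IsPoolingSet P) (hf : PosDensityOn f 0 1) (hc : c ∉ P)
    (hθ : θ ≤ c) : poolMean f P θ ≤ c := by
  by_cases hmem : θ ∈ P
  · exact (hP.poolMean_mem_Icc hf hmem).2.trans
      (compSup_le hmem (connectedComponentIn_subset_Iic_of_notMem hc hθ))
  · rwa [poolMean, if_neg hmem]

lemma le_poolMean_of_notMem (hP : IsPoolingSet P) (hf : PosDensityOn f 0 1) (hc : c ∉ P)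
    (hθ : c ≤ θ) : c ≤ poolMean f P θ := by
  by_cases hmem : θ ∈ P
  · exact (le_compInf hmem (connectedComponentIn_subset_Ici_of_notMem hc hθ)).trans
      (hP.poolMean_mem_Icc hf hmem).1
  · rwa [poolMean, if_neg hmem]

lemma monotone_poolMean (hP : IsPoolingSet P) (hf : PosDensityOn f 0 1) :
    Monotone (poolMean f P) := by
  intro x y hxy
  by_cases hsub : Icc x y ⊆ P
  · have hcomp : Icc x y ⊆ connectedComponentIn P x :=
      isPreconnected_Icc.subset_connectedComponentIn (left_mem_Icc.2 hxy) hsub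
    rw [poolMean_eq_of_mem (hcomp (left_mem_Icc.2 hxy)),
      poolMean_eq_of_mem (hcomp (right_mem_Icc.2 hxy))]
  · obtain ⟨c, hc, hcP⟩ := not_subset.1 hsub
    exact (hP.poolMean_le_of_notMem hf hcP hc.1).trans (hP.le_poolMean_of_notMem hf hcP hc.2)

lemma mapsTo_poolMean (hP : IsPoolingSet P) (hf : PosDensityOn f 0 1) :
    MapsTo (poolMean f P) (Icc 0 1) (Icc 0 1) := by
  intro t ht
  by_cases hmem : t ∈ P
  · exact Icc_subset_Icc (hP.zero_le_compInf hmem) (hP.compSup_le_one hmem)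
      (hP.poolMean_mem_Icc hf hmem)
  · rwa [poolMean, if_neg hmem]

lemma integrableOn_comp_poolMean_mul (hP : IsPoolingSet P) (hf : PosDensityOn f 0 1)
    (hu : ContinuousOn u (Icc 0 1)) :
    IntegrableOn (fun t => u (poolMean f P t) * f t) (Icc 0 1) :=
  hf.integrableOn_comp_mul hu (hP.monotone_poolMean hf).measurable (hP.mapsTo_poolMean hf)

lemma intervalIntegrable_comp_poolMean_mul (hP : IsPoolingSet P) (hf : PosDensityOn f 0 1)
    (hu : ContinuousOn u (Icc 0 1)) (ha : 0 ≤ a) (hab : a ≤ b) (hb : b ≤ 1) :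
    IntervalIntegrable (fun t => u (poolMean f P t) * f t) volume a b :=
  (intervalIntegrable_iff_integrableOn_Icc_of_le hab).2
    ((hP.integrableOn_comp_poolMean_mul hf hu).mono_set (Icc_subset_Icc ha hb))

lemma integral_comp_poolMean_mul (hP : IsPoolingSet P) (hθ : θ ∈ P) :
    ∫ t in compInf P θ..compSup P θ, u (poolMean f P t) * f t =
      poolPayoff f u (compInf P θ) (compSup P θ) := by
  have hlt := hP.compInf_lt_compSup hθ
  calc ∫ t in compInf P θ..compSup P θ, u (poolMean f P t) * f t
      = ∫ t in compInf P θ..compSup P θ,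
          u (condMean f (compInf P θ) (compSup P θ)) * f t := by
        refine intervalIntegral.integral_congr_Ioo_of_le hlt.le fun t ht => ?_
        simp only [poolMean_eq_of_mem (hP.Ioo_subset_connectedComponentIn hθ ht)]
    _ = poolPayoff f u (compInf P θ) (compSup P θ) := by
        rw [intervalIntegral.integral_const_mul, mul_comm, poolPayoff]

lemma setIntegral_connectedComponentIn_nonneg (hP : IsPoolingSet P) (hf : PosDensityOn f 0 1)
    (hu : ContinuousOn u (Icc 0 1)) (hac : IsCut P a) (hbc : IsCut P b)
    {p : ℝ → ℝ} (hp : ConvexOn ℝ (Icc a b) p) (hpc : ContinuousOn p (Icc a b))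
    (hup : ∀ t ∈ Icc a b, u t ≤ p t) (hθ : θ ∈ P) :
    0 ≤ ∫ t in connectedComponentIn P θ ∩ Ioo a b, (p t * f t - u (poolMean f P t) * f t) := by
  rcases (connectedComponentIn P θ ∩ Ioo a b).eq_empty_or_nonempty with hempty | ⟨t, ht, htab⟩
  · simp [hempty]
  have ha : a ≤ compInf P θ := le_compInf hθ
    ((hac θ hθ).resolve_left fun hsub => (hsub ht).not_gt htab.1)
  have hb : compSup P θ ≤ b := compSup_le hθ
    ((hbc θ hθ).resolve_right fun hsub => (hsub ht).not_gt htab.2)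
  have hlt := hP.compInf_lt_compSup hθ
  have hab : Icc (compInf P θ) (compSup P θ) ⊆ Icc a b := Icc_subset_Icc ha hb
  have h0 := hP.zero_le_compInf hθ
  have h1 := hP.compSup_le_one hθ
  have hfC : PosDensityOn f (compInf P θ) (compSup P θ) := hf.mono h0 h1
  rw [setIntegral_eq_intervalIntegral hlt.le
      (subset_inter (hP.Ioo_subset_connectedComponentIn hθ) (Ioo_subset_Ioo ha hb))
      (inter_subset_left.trans (hP.connectedComponentIn_subset_Icc θ)),
    intervalIntegral.integral_sub (hfC.intervalIntegrable_mul hlt.le (hpc.mono hab))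
      (hP.intervalIntegrable_comp_poolMean_mul hf hu h0 hlt.le h1),
    hP.integral_comp_poolMean_mul hθ, sub_nonneg]
  exact leDualValue_poolPayoff hfC hlt.le p (hp.subset hab (convex_Icc _ _)) (hpc.mono hab)
    fun t ht => hup t (hab ht)

lemma leDualValue_integral_comp_poolMean (hP : IsPoolingSet P) (hf : PosDensityOn f 0 1)
    (hu : ContinuousOn u (Icc 0 1)) (ha : 0 ≤ a) (hab : a ≤ b) (hb : b ≤ 1)
    (hac : IsCut P a) (hbc : IsCut P b) :
    LeDualValue f u a b (∫ t in a..b, u (poolMean f P t) * f t) := by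
  intro p hp hpc hup
  have hpint := (hf.mono ha hb).intervalIntegrable_mul hab hpc
  have hpool := hP.intervalIntegrable_comp_poolMean_mul hf hu ha hab hb
  set φ : ℝ → ℝ := fun t => p t * f t - u (poolMean f P t) * f t with hφ
  have hφint : IntegrableOn φ (Ioo a b) :=
    (intervalIntegrable_iff_integrableOn_Ioo_of_le hab).1 (hpint.sub hpool)
  have hpooled : 0 ≤ ∫ t in P, (Ioo a b).indicator φ t := by
    refine setIntegral_nonneg_of_connectedComponentIn
      ((integrable_indicator_iff measurableSet_Ioo).2 hφint).integrableOn
      (fun θ hθ => hP.interior_connectedComponentIn_nonempty hθ) fun θ hθ => ?_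
    rw [setIntegral_indicator measurableSet_Ioo]
    exact hP.setIntegral_connectedComponentIn_nonneg hf hu hac hbc hp hpc hup hθ
  have hrevealed : 0 ≤ ∫ t in Ioo a b \ P, φ t := by
    refine setIntegral_nonneg (measurableSet_Ioo.diff hP.measurableSet) fun t ht => ?_
    have htab := Ioo_subset_Icc_self ht.1
    simp only [hφ, poolMean, if_neg ht.2, ← sub_mul]
    exact mul_nonneg (sub_nonneg.2 (hup t htab))
      (hf.pos t ⟨ha.trans htab.1, htab.2.trans hb⟩).le
  rw [setIntegral_indicator measurableSet_Ioo, inter_comm] at hpooled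
  rw [← sub_nonneg, ← intervalIntegral.integral_sub hpint hpool,
    intervalIntegral.integral_of_le hab, integral_Ioc_eq_integral_Ioo,
    ← integral_inter_add_sdiff hP.measurableSet hφint]
  exact add_nonneg hpooled hrevealed

end IsPoolingSet

lemma isPoolingSet_Icc : IsPoolingSet (Icc 0 1) := ⟨univ, isOpen_univ, (univ_inter _).symm⟩

lemma poolValue_Icc (f u : ℝ → ℝ) : poolValue f u (Icc 0 1) = poolPayoff f u 0 1 := by
  have h0 : (0 : ℝ) ∈ Icc (0 : ℝ) 1 := left_mem_Icc.2 zero_le_one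
  have hcomp : connectedComponentIn (Icc (0 : ℝ) 1) 0 = Icc 0 1 :=
    isPreconnected_Icc.connectedComponentIn h0
  have hinf : compInf (Icc 0 1) 0 = 0 := by rw [compInf, hcomp, csInf_Icc zero_le_one]
  have hsup : compSup (Icc 0 1) 0 = 1 := by rw [compSup, hcomp, csSup_Icc zero_le_one]
  have hpool := isPoolingSet_Icc.integral_comp_poolMean_mul (f := f) (u := u) h0
  rwa [hinf, hsup] at hpool

namespace ConcaveConvexConcave

variable {f u u' : ℝ → ℝ} {θL θH : ℝ} {P : Set ℝ}

lemma poolValue_le_of_notMem (hu : ConcaveConvexConcave u u' 0 θL θH 1)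
    (hf : PosDensityOn f 0 1) (hpair : ¬ HasTangencyPair f u u' 0 θL θH 1) (hP : IsPoolingSet P)
    {c : ℝ} (hc : c ∈ Icc θL θH) (hcP : c ∉ P) :
    ∃ z ∈ Icc 0 1, poolValue f u P ≤ twoPoolPayoff f u 0 1 z := by
  have hc0 : 0 ≤ c := hu.left_lt.le.trans hc.1
  have hc1 : c ≤ 1 := hc.2.trans hu.lt_right.le
  have hcut := isCut_of_notMem hcP
  rw [poolValue, ← intervalIntegral.integral_add_adjacent_intervals
    (hP.intervalIntegrable_comp_poolMean_mul hf hu.continuousOn le_rfl hc0 hc1)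
    (hP.intervalIntegrable_comp_poolMean_mul hf hu.continuousOn hc0 hc1 le_rfl)]
  exact hu.exists_add_le_twoPoolPayoff hf hpair hc
    (hP.leDualValue_integral_comp_poolMean hf hu.continuousOn le_rfl hc0 hc1 hP.isCut_zero hcut)
    (hP.leDualValue_integral_comp_poolMean hf hu.continuousOn hc0 hc1 le_rfl hcut hP.isCut_one)

lemma poolValue_le_of_Icc_subset (hu : ConcaveConvexConcave u u' 0 θL θH 1)
    (hf : PosDensityOn f 0 1) (hpair : ¬ HasTangencyPair f u u' 0 θL θH 1) (hP : IsPoolingSet P)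
    (hsub : Icc θL θH ⊆ P) :
    ∃ z ∈ Icc 0 1, poolValue f u P ≤ twoPoolPayoff f u 0 1 z := by
  have hL : θL ∈ Icc θL θH := left_mem_Icc.2 hu.inflection_lt.le
  have hθ : θL ∈ P := hsub hL
  set ξ := compInf P θL
  set ζ := compSup P θL
  have hIcc : Icc θL θH ⊆ Icc ξ ζ :=
    (isPreconnected_Icc.subset_connectedComponentIn hL hsub).trans
      (hP.connectedComponentIn_subset_Icc θL)
  have h0ξ : 0 ≤ ξ := hP.zero_le_compInf hθ
  have hξζ : ξ ≤ ζ := (hP.compInf_lt_compSup hθ).le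
  have hζ1 : ζ ≤ 1 := hP.compSup_le_one hθ
  have hξL : ξ ≤ θL := (hIcc hL).1
  have hHζ : θH ≤ ζ := (hIcc (right_mem_Icc.2 hu.inflection_lt.le)).2
  have hξ1 : ξ ≤ 1 := hξζ.trans hζ1
  have h0ζ : 0 ≤ ζ := h0ξ.trans hξζ
  have hleft : ∫ t in 0..ξ, u (poolMean f P t) * f t ≤ poolPayoff f u 0 ξ :=
    (hP.leDualValue_integral_comp_poolMean hf hu.continuousOn le_rfl h0ξ hξ1 hP.isCut_zero
      (hP.isCut_compInf hθ)).le_poolPayoff_of_concaveOn (hf.mono le_rfl hξ1) h0ξ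
      (hu.concave_left.concaveOn.subset (Icc_subset_Icc_right hξL) (convex_Icc _ _))
      fun t ht => hu.hasDerivAt t (Icc_subset_Icc_right hξ1 ht)
  have hright : ∫ t in ζ..1, u (poolMean f P t) * f t ≤ poolPayoff f u ζ 1 :=
    (hP.leDualValue_integral_comp_poolMean hf hu.continuousOn h0ζ hζ1 le_rfl
      (hP.isCut_compSup hθ) hP.isCut_one).le_poolPayoff_of_concaveOn (hf.mono h0ζ le_rfl) hζ1
      (hu.concave_right.concaveOn.subset (Icc_subset_Icc_left hHζ) (convex_Icc _ _))
      fun t ht => hu.hasDerivAt t (Icc_subset_Icc_left h0ζ ht)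
  obtain ⟨z, hz, hle⟩ := hu.exists_threePool_le_twoPoolPayoff hf hpair ⟨h0ξ, hξL⟩ ⟨hHζ, hζ1⟩
  refine ⟨z, hz, le_trans ?_ hle⟩
  rw [poolValue, ← intervalIntegral.integral_add_adjacent_intervals
      (hP.intervalIntegrable_comp_poolMean_mul hf hu.continuousOn le_rfl h0ζ hζ1)
      (hP.intervalIntegrable_comp_poolMean_mul hf hu.continuousOn h0ζ hζ1 le_rfl),
    ← intervalIntegral.integral_add_adjacent_intervals
      (hP.intervalIntegrable_comp_poolMean_mul hf hu.continuousOn le_rfl h0ξ hξ1)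
      (hP.intervalIntegrable_comp_poolMean_mul hf hu.continuousOn h0ξ hξζ hζ1),
    hP.integral_comp_poolMean_mul hθ]
  gcongr

lemma poolValue_le_twoPoolPayoff (hu : ConcaveConvexConcave u u' 0 θL θH 1)
    (hf : PosDensityOn f 0 1) (hpair : ¬ HasTangencyPair f u u' 0 θL θH 1) (hP : IsPoolingSet P) :
    ∃ z ∈ Icc 0 1, poolValue f u P ≤ twoPoolPayoff f u 0 1 z := by
  by_cases hsub : Icc θL θH ⊆ P
  · exact hu.poolValue_le_of_Icc_subset hf hpair hP hsub
  · obtain ⟨c, hc, hcP⟩ := not_subset.1 hsub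
    exact hu.poolValue_le_of_notMem hf hpair hP hc hcP

end ConcaveConvexConcave

/-! ### The best two-interval pooling -/

section BestSplit

open Filter Topology Asymptotics

lemma isLittleO_mul_comp_div {α : Type*} {l : Filter α} {M Q : α → ℝ} {u : ℝ → ℝ} {p q k z : ℝ}
    (hp : p ≠ 0) (hM : Tendsto M l (𝓝 p)) (hu : HasDerivAt u k (q / p))
    (hQ : (fun y => Q y - q - z * (M y - p)) =o[l] fun y => M y - p) :
    (fun y => M y * u (Q y / M y) - p * u (q / p) - (u (q / p) + k * (z - q / p)) * (M y - p))
      =o[l] fun y => M y - p := by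
  set m := q / p with hm
  have hM0 : ∀ᶠ y in l, M y ≠ 0 := hM.eventually_ne hp
  have hdiff : (fun y => Q y / M y - m) =O[l] fun y => M y - p := by
    have hO := ((hM.inv₀ hp).isBigO_one ℝ).mul
      (hQ.isBigO.add ((isBigO_refl (fun y => M y - p) l).const_mul_left (z - m)))
    refine (hO.congr' ?_ (.of_forall fun y => one_mul _))
    filter_upwards [hM0] with y hy
    rw [hm]
    field_simp
    ring
  have hlim : Tendsto (fun y => Q y / M y) l (𝓝 m) := by
    have hzero : Tendsto (fun y => M y - p) l (𝓝 0) := by simpa using hM.sub_const p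
    simpa using (hdiff.trans_tendsto hzero).add_const m
  have htaylor : (fun y => M y * (u (Q y / M y) - u m - (Q y / M y - m) • k))
      =o[l] fun y => 1 * (M y - p) :=
    (hM.isBigO_one ℝ).mul_isLittleO ((hu.isLittleO.comp_tendsto hlim).trans_isBigO hdiff)
  simp only [one_mul] at htaylor
  refine (htaylor.add (hQ.const_mul_left k)).congr' ?_ .rfl
  filter_upwards [hM0] with y hy
  simp only [smul_eq_mul, hm]
  field_simp
  ring

lemma nonpos_of_isLittleO_sub_mul {α : Type*} {l : Filter α} [l.NeBot] {g G : α → ℝ} {c : ℝ}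
    (hg : ∀ᶠ y in l, g y ≤ 0) (hG : ∀ᶠ y in l, 0 < G y)
    (h : (fun y => g y - c * G y) =o[l] G) : c ≤ 0 := by
  have hlim : Tendsto (fun y => g y / G y) l (𝓝 c) := by
    have hsum := h.tendsto_div_nhds_zero.add_const c
    rw [zero_add] at hsum
    refine hsum.congr' ?_
    filter_upwards [hG] with y hy
    field_simp
    ring
  refine le_of_tendsto hlim ?_
  filter_upwards [hg, hG] with y hgy hGy
  exact div_nonpos_of_nonpos_of_nonneg hgy hGy.le

lemma poolPayoff_symm (f u : ℝ → ℝ) (x y : ℝ) : poolPayoff f u y x = -poolPayoff f u x y := by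
  rw [poolPayoff, poolPayoff, intervalIntegral.integral_symm, condMean_comm, neg_mul]

lemma twoPoolPayoff_left (f u : ℝ → ℝ) (a b : ℝ) :
    twoPoolPayoff f u a b a = poolPayoff f u a b := by
  rw [twoPoolPayoff, poolPayoff_self, zero_add]

lemma twoPoolPayoff_right (f u : ℝ → ℝ) (a b : ℝ) :
    twoPoolPayoff f u a b b = poolPayoff f u a b := by
  rw [twoPoolPayoff, poolPayoff_self, add_zero]

namespace PosDensityOn

variable {f u u' : ℝ → ℝ} {a b x y z : ℝ}

lemma condMean_mem_uIcc (hf : PosDensityOn f a b) (hx : x ∈ Icc a b) (hy : y ∈ Icc a b)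
    (hxy : x ≠ y) : condMean f x y ∈ uIcc x y := by
  rcases hxy.lt_or_gt with h | h
  · rw [uIcc_of_le h.le]
    exact (hf.mono hx.1 hy.2).condMean_mem_Icc h
  · rw [uIcc_of_ge h.le, condMean_comm]
    exact (hf.mono hy.1 hx.2).condMean_mem_Icc h

lemma integral_mul_sub (hf : PosDensityOn f a b) {g : ℝ → ℝ} (hg : ContinuousOn g (Icc a b))
    (hx : x ∈ Icc a b) (hy : y ∈ Icc a b) (hz : z ∈ Icc a b) :
    (∫ t in x..y, g t * f t) - ∫ t in x..z, g t * f t = ∫ t in z..y, g t * f t := by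
  have hab := hx.1.trans hx.2
  have hint {c : ℝ} (hc : c ∈ Icc a b) :
      IntervalIntegrable (fun t => g t * f t) volume x c := by
    rw [← uIcc_of_le hab] at hx hc
    exact (hf.intervalIntegrable_mul hab hg).mono_set (uIcc_subset_uIcc hx hc)
  exact intervalIntegral.integral_interval_sub_left (hint hy) (hint hz)

lemma mass_sub (hf : PosDensityOn f a b) (hx : x ∈ Icc a b) (hy : y ∈ Icc a b)
    (hz : z ∈ Icc a b) : (∫ t in x..y, f t) - ∫ t in x..z, f t = ∫ t in z..y, f t := by
  simpa only [one_mul] using hf.integral_mul_sub (g := fun _ => 1) continuousOn_const hx hy hz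

lemma continuousOn_poolPayoff (hf : PosDensityOn f a b) (hu : ContinuousOn u (Icc a b))
    (hx : x ∈ Icc a b) : ContinuousOn (poolPayoff f u x) (Icc a b) := by
  have hsub {y : ℝ} (hy : y ∈ Icc a b) (hxy : x ≠ y) : condMean f x y ∈ Icc a b :=
    uIcc_subset_Icc hx hy (hf.condMean_mem_uIcc hx hy hxy)
  intro z hz
  rcases eq_or_ne x z with rfl | hxz
  · obtain ⟨C, hC⟩ := isCompact_Icc.exists_bound_of_continuousOn hu
    have hmass := ((hf.continuousOn_mass hx).norm.mul_const C) x hx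
    simp only [ContinuousWithinAt, intervalIntegral.integral_same, norm_zero, zero_mul] at hmass
    rw [ContinuousWithinAt, poolPayoff_self]
    refine squeeze_zero_norm' ?_ hmass
    filter_upwards [self_mem_nhdsWithin] with y hy
    rcases eq_or_ne x y with rfl | hxy
    · simp
    · rw [poolPayoff, norm_mul]
      exact mul_le_mul_of_nonneg_left (hC _ (hsub hy hxy)) (norm_nonneg _)
  · have hoff : ContinuousOn (poolPayoff f u x) (Icc a b \ {x}) :=
      ((hf.continuousOn_mass hx).mono sdiff_subset).mul
        (hu.comp (hf.continuousOn_condMean hx) fun y hy => hsub hy.1 (Ne.symm hy.2))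
    have hcont := hoff z ⟨hz, hxz.symm⟩
    rwa [ContinuousWithinAt, hxz.symm.nhdsWithin_sdiff_singleton] at hcont

lemma continuousOn_twoPoolPayoff (hf : PosDensityOn f a b) (hu : ContinuousOn u (Icc a b))
    (hab : a ≤ b) : ContinuousOn (twoPoolPayoff f u a b) (Icc a b) := by
  refine (hf.continuousOn_poolPayoff hu (left_mem_Icc.2 hab)).add ?_
  simp only [poolPayoff_symm f u b]
  exact (hf.continuousOn_poolPayoff hu (right_mem_Icc.2 hab)).neg

lemma isLittleO_integral_sub_mul (hf : PosDensityOn f a b) (hz : z ∈ Icc a b) :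
    (fun y => (∫ t in z..y, t * f t) - z * ∫ t in z..y, f t)
      =o[𝓝[Icc a b \ {z}] z] fun y => ∫ t in z..y, f t := by
  have hid : Tendsto (fun y => |y - z|) (𝓝[Icc a b \ {z}] z) (𝓝 0) := by
    have hcont : Continuous fun y => |y - z| := by fun_prop
    simpa using (hcont.tendsto z).mono_left nhdsWithin_le_nhds
  have hmean : Tendsto (fun y => condMean f z y - z) (𝓝[Icc a b \ {z}] z) (𝓝 0) := by
    refine squeeze_zero_norm' ?_ hid
    filter_upwards [self_mem_nhdsWithin] with y hy
    exact abs_sub_left_of_mem_uIcc (hf.condMean_mem_uIcc hz hy.1 (Ne.symm hy.2))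
  refine (((isLittleO_one_iff ℝ).2 hmean).mul_isBigO
    (isBigO_refl (fun y => ∫ t in z..y, f t) _)).congr' ?_ (.of_forall fun y => one_mul _)
  filter_upwards [self_mem_nhdsWithin] with y hy
  have hmass := hf.mass_ne_zero hz hy.1 (Ne.symm hy.2)
  rw [condMean]
  field_simp

lemma isLittleO_poolPayoff_sub (hf : PosDensityOn f a b) (hx : x ∈ Icc a b) (hz : z ∈ Icc a b)
    (hxz : x ≠ z) (hd : HasDerivAt u (u' (condMean f x z)) (condMean f x z)) :
    (fun y => poolPayoff f u x y - poolPayoff f u x z -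
        tangentLine u u' (condMean f x z) z * ∫ t in z..y, f t)
      =o[𝓝[Icc a b \ {z}] z] fun y => ∫ t in z..y, f t := by
  have hmass : ∀ᶠ y in 𝓝[Icc a b \ {z}] z,
      (∫ t in x..y, f t) - ∫ t in x..z, f t = ∫ t in z..y, f t := by
    filter_upwards [self_mem_nhdsWithin] with y hy using hf.mass_sub hx hy.1 hz
  have hlim := (hf.continuousOn_mass hx z hz).tendsto.mono_left
    (nhdsWithin_mono z (sdiff_subset (t := {z})))
  refine (isLittleO_mul_comp_div (Q := fun y => ∫ t in x..y, t * f t) (z := z)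
    (hf.mass_ne_zero hx hz hxz) hlim hd
    ((hf.isLittleO_integral_sub_mul hz).congr' ?_ (hmass.mono fun _ => Eq.symm))).congr' ?_ hmass
  · filter_upwards [self_mem_nhdsWithin, hmass] with y hy hmass
    have hmoment := hf.integral_mul_sub (g := fun t => t) continuousOn_id hx hy.1 hz
    rw [hmass, ← hmoment]
  · filter_upwards [hmass] with y hmass
    rw [hmass]
    rfl

lemma isLittleO_twoPoolPayoff_sub (hf : PosDensityOn f a b) (hz : z ∈ Ioo a b)
    (hu : ∀ t ∈ Icc a b, HasDerivAt u (u' t) t) :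
    (fun y => twoPoolPayoff f u a b y - twoPoolPayoff f u a b z -
        (tangentLine u u' (condMean f a z) z - tangentLine u u' (condMean f z b) z) *
          ∫ t in z..y, f t)
      =o[𝓝[Icc a b \ {z}] z] fun y => ∫ t in z..y, f t := by
  have hzI := Ioo_subset_Icc_self hz
  have hab := hz.1.le.trans hz.2.le
  have hmean {x : ℝ} (hx : x ∈ Icc a b) (hxz : x ≠ z) : condMean f x z ∈ Icc a b :=
    uIcc_subset_Icc hx hzI (hf.condMean_mem_uIcc hx hzI hxz)
  have ha := left_mem_Icc.2 hab
  have hb := right_mem_Icc.2 hab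
  refine ((hf.isLittleO_poolPayoff_sub ha hzI hz.1.ne (hu _ (hmean ha hz.1.ne))).sub
    (hf.isLittleO_poolPayoff_sub hb hzI hz.2.ne' (hu _ (hmean hb hz.2.ne')))).congr_left
    fun y => ?_
  rw [twoPoolPayoff, twoPoolPayoff, poolPayoff_symm f u b y, poolPayoff_symm f u b z,
    condMean_comm f z b]
  ring

lemma tangentLine_eq_of_isMaxOn_twoPoolPayoff (hf : PosDensityOn f a b) (hz : z ∈ Ioo a b)
    (hu : ∀ t ∈ Icc a b, HasDerivAt u (u' t) t)
    (hmax : IsMaxOn (twoPoolPayoff f u a b) (Icc a b) z) :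
    tangentLine u u' (condMean f a z) z = tangentLine u u' (condMean f z b) z := by
  have ho := hf.isLittleO_twoPoolPayoff_sub hz hu
  have hright : 𝓝[Ioo z b] z ≤ 𝓝[Icc a b \ {z}] z :=
    nhdsWithin_mono z fun y hy => ⟨⟨hz.1.le.trans hy.1.le, hy.2.le⟩, hy.1.ne'⟩
  have hleft : 𝓝[Ioo a z] z ≤ 𝓝[Icc a b \ {z}] z :=
    nhdsWithin_mono z fun y hy => ⟨⟨hy.1.le, hy.2.le.trans hz.2.le⟩, hy.2.ne⟩
  have hle : ∀ᶠ y in 𝓝[Icc a b \ {z}] z,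
      twoPoolPayoff f u a b y - twoPoolPayoff f u a b z ≤ 0 := by
    filter_upwards [self_mem_nhdsWithin] with y hy using sub_nonpos.2 (hmax hy.1)
  have := right_nhdsWithin_Ioo_neBot hz.1
  have := left_nhdsWithin_Ioo_neBot hz.2
  refine le_antisymm (sub_nonpos.1 ?_) (sub_nonpos.1 ?_)
  · refine nonpos_of_isLittleO_sub_mul (hle.filter_mono hright) ?_ (ho.mono hright)
    filter_upwards [self_mem_nhdsWithin] with y hy
    exact (hf.mono hz.1.le hy.2.le).mass_pos hy.1
  · refine nonpos_of_isLittleO_sub_mul (G := fun y => ∫ t in y..z, f t)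
      (hle.filter_mono hleft) ?_ ?_
    · filter_upwards [self_mem_nhdsWithin] with y hy
      exact (hf.mono hy.1.le hz.2.le).mass_pos hy.2
    · simp only [intervalIntegral.integral_symm z]
      refine ((ho.mono hleft).congr_left fun y => ?_).neg_right
      ring

lemma twoPoolPayoff_le_poolPayoff (hf : PosDensityOn f a b)
    (hu : ∀ t ∈ Icc a b, HasDerivAt u (u' t) t)
    (hsplit : ¬ ∃ z ∈ Ioo a b,
      tangentLine u u' (condMean f a z) z = tangentLine u u' (condMean f z b) z ∧
      poolPayoff f u a b ≤ twoPoolPayoff f u a b z)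
    (hy : y ∈ Icc a b) : twoPoolPayoff f u a b y ≤ poolPayoff f u a b := by
  have hab := hy.1.trans hy.2
  have huc : ContinuousOn u (Icc a b) := fun t ht => (hu t ht).continuousAt.continuousWithinAt
  obtain ⟨z, hz, hmax⟩ := isCompact_Icc.exists_isMaxOn ⟨y, hy⟩
    (hf.continuousOn_twoPoolPayoff huc hab)
  refine (hmax hy).trans ?_
  rcases hz.1.eq_or_lt with rfl | haz
  · exact (twoPoolPayoff_left f u a b).le
  rcases hz.2.eq_or_lt with rfl | hzb
  · exact (twoPoolPayoff_right f u a z).le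
  by_contra! hlt
  exact hsplit ⟨z, ⟨haz, hzb⟩,
    hf.tangentLine_eq_of_isMaxOn_twoPoolPayoff ⟨haz, hzb⟩ hu hmax, hlt.le⟩

end PosDensityOn

end BestSplit

/-! ### Second derivatives -/

namespace C1AC

variable {u u' u'' : ℝ → ℝ} {x y θL θH : ℝ}

lemma neg (hu : C1AC u u' u'') :
    C1AC (fun t => -u t) (fun t => -u' t) (fun t => -u'' t) :=
  ⟨fun t ht => (hu.1 t ht).neg, hu.2.1.neg, hu.2.2.1.neg, fun t ht => by
    simp only [hu.2.2.2 t ht, intervalIntegral.integral_neg, neg_add]⟩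

lemma intervalIntegrable (hu : C1AC u u' u'') (hx : x ∈ Icc (0 : ℝ) 1) (hy : y ∈ Icc (0 : ℝ) 1) :
    IntervalIntegrable u'' volume x y :=
  (hu.2.2.1.mono_set (uIcc_subset_Icc hx hy)).intervalIntegrable

lemma integral_eq_sub (hu : C1AC u u' u'') (hx : x ∈ Icc (0 : ℝ) 1) (hy : y ∈ Icc (0 : ℝ) 1) :
    ∫ t in x..y, u'' t = u' y - u' x := by
  have h0 : (0 : ℝ) ∈ Icc (0 : ℝ) 1 := ⟨le_rfl, zero_le_one⟩
  rw [← intervalIntegral.integral_interval_sub_left (hu.intervalIntegrable h0 hy)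
    (hu.intervalIntegrable h0 hx), hu.2.2.2 x hx, hu.2.2.2 y hy, add_sub_add_left_eq_sub]

lemma strictConvexOn_Icc (hu : C1AC u u' u'') (hx : 0 ≤ x) (hy : y ≤ 1)
    (hpos : ∀ t ∈ Ioo x y, 0 < u'' t) : StrictConvexOn ℝ (Icc x y) u := by
  have hsub : Icc x y ⊆ Icc 0 1 := Icc_subset_Icc hx hy
  refine StrictMonoOn.strictConvexOn_of_deriv (convex_Icc x y)
    (fun t ht => (hu.1 t (hsub ht)).continuousAt.continuousWithinAt) ?_
  rw [interior_Icc]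
  intro s hs t ht hst
  have hs' := hsub (Ioo_subset_Icc_self hs)
  have ht' := hsub (Ioo_subset_Icc_self ht)
  rw [(hu.1 s hs').deriv, (hu.1 t ht').deriv, ← sub_pos, ← hu.integral_eq_sub hs' ht']
  exact intervalIntegral.intervalIntegral_pos_of_pos_on (hu.intervalIntegrable hs' ht')
    (fun r hr => hpos r ⟨hs.1.trans hr.1, hr.2.trans ht.2⟩) hst

lemma strictConcaveOn_Icc (hu : C1AC u u' u'') (hx : 0 ≤ x) (hy : y ≤ 1)
    (hneg : ∀ t ∈ Ioo x y, u'' t < 0) : StrictConcaveOn ℝ (Icc x y) u :=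
  neg_strictConvexOn_iff.1 <| hu.neg.strictConvexOn_Icc hx hy fun t ht => neg_pos.2 (hneg t ht)

lemma concaveConvexConcave (hu : C1AC u u' u'') (hθL : 0 < θL) (hLH : θL < θH) (hθH : θH < 1)
    (hneg₁ : ∀ t ∈ Ico 0 θL, u'' t < 0) (hpos : ∀ t ∈ Ioo θL θH, 0 < u'' t)
    (hneg₂ : ∀ t ∈ Ioc θH 1, u'' t < 0) : ConcaveConvexConcave u u' 0 θL θH 1 where
  hasDerivAt := hu.1
  continuousOn_deriv := hu.2.1
  left_lt := hθL
  inflection_lt := hLH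
  lt_right := hθH
  concave_left := hu.strictConcaveOn_Icc le_rfl (hLH.trans hθH).le fun t ht =>
    hneg₁ t (Ioo_subset_Ico_self ht)
  convex_middle := hu.strictConvexOn_Icc hθL.le hθH.le hpos
  concave_right := hu.strictConcaveOn_Icc (hθL.trans hLH).le le_rfl fun t ht =>
    hneg₂ t (Ioo_subset_Ioc_self ht)

end C1AC

namespace IsDensity

variable {f : ℝ → ℝ} {z : ℝ}

lemma posDensityOn (hf : IsDensity f) : PosDensityOn f 0 1 := ⟨hf.1, hf.2.1⟩

lemma poolPayoff_zero_one (hf : IsDensity f) (u : ℝ → ℝ) :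
    poolPayoff f u 0 1 = u (∫ t in (0 : ℝ)..1, t * f t) := by
  rw [poolPayoff, condMean, hf.2.2, one_mul, div_one]

lemma one_sub_cdfF (hf : IsDensity f) (hz : z ∈ Icc (0 : ℝ) 1) :
    1 - cdfF f z = ∫ t in z..1, f t := by
  have hsub := hf.posDensityOn.mass_sub ⟨le_rfl, zero_le_one⟩ ⟨zero_le_one, le_rfl⟩ hz
  rwa [hf.2.2] at hsub

lemma twoPoolPayoff_zero_one (hf : IsDensity f) (u : ℝ → ℝ) (hz : z ∈ Icc (0 : ℝ) 1) :
    twoPoolPayoff f u 0 1 z =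
      u (condMean f 0 z) * cdfF f z + u (condMean f z 1) * (1 - cdfF f z) := by
  rw [hf.one_sub_cdfF hz, cdfF, twoPoolPayoff, poolPayoff, poolPayoff]
  ring

end IsDensity

theorem complete_pooling_two_inflections_general {f u u' : ℝ → ℝ} {θL θH : ℝ}
    (hf : PosDensityOn f 0 1) (hu : ConcaveConvexConcave u u' 0 θL θH 1)
    (hpair : ¬ HasTangencyPair f u u' 0 θL θH 1)
    (hsplit : ¬ ∃ z ∈ Ioo (0 : ℝ) 1,
      tangentLine u u' (condMean f 0 z) z = tangentLine u u' (condMean f z 1) z ∧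
      poolPayoff f u 0 1 ≤ twoPoolPayoff f u 0 1 z) :
    IsOptimal f u (Icc (0 : ℝ) 1) := by
  refine ⟨isPoolingSet_Icc, fun Q hQ => ?_⟩
  obtain ⟨z, hz, hle⟩ := hu.poolValue_le_twoPoolPayoff hf hpair hQ
  rw [poolValue_Icc]
  exact hle.trans (hf.twoPoolPayoff_le_poolPayoff hu.hasDerivAt hsplit hz)

/-- two inflection points, no two-sided tangency pair and no
admissible split point `θ_*^M`; then complete pooling `[0,1]` is optimal. -/
theorem complete_pooling_two_inflections (f : ℝ → ℝ) (hf : IsDensity f)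
    (u u' u'' : ℝ → ℝ) (hu : C1AC u u' u'')
    (θL θH : ℝ) (hθL : θL ∈ Ioo (0:ℝ) 1) (hθH : θH ∈ Ioo (0:ℝ) 1) (hLH : θL < θH)
    (hneg1 : ∀ θ ∈ Ico (0:ℝ) θL, u'' θ < 0)
    (hpos : ∀ θ ∈ Ioo θL θH, 0 < u'' θ)
    (hneg2 : ∀ θ ∈ Ioc θH (1:ℝ), u'' θ < 0)
    (hnopair : ¬ ∃ x ∈ Ioo θL θH, ∃ y ∈ Ioo θL θH, x < y ∧
      u (condMean f 0 x) + u' (condMean f 0 x) * (x - condMean f 0 x) = u x ∧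
      u (condMean f y 1) + u' (condMean f y 1) * (y - condMean f y 1) = u y)
    (hnoM : ¬ ∃ z ∈ Ioo (0:ℝ) 1,
      u (condMean f 0 z) + u' (condMean f 0 z) * (z - condMean f 0 z)
        = u (condMean f z 1) + u' (condMean f z 1) * (z - condMean f z 1) ∧
      u (∫ t in (0:ℝ)..1, t * f t) ≤
        u (condMean f 0 z) * cdfF f z + u (condMean f z 1) * (1 - cdfF f z)) :
    IsOptimal f u (Icc (0:ℝ) 1) := by
  refine complete_pooling_two_inflections_general hf.posDensityOn
    (hu.concaveConvexConcave hθL.1 hLH hθH.2 hneg1 hpos hneg2) hnopair ?_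
  rintro ⟨z, hz, htangent, hle⟩
  rw [hf.poolPayoff_zero_one, hf.twoPoolPayoff_zero_one u (Ioo_subset_Icc_self hz)] at hle
  exact hnoM ⟨z, hz, htangent, hle⟩
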